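/- arXiv:0806.0914 — 2 statements merged into one kernel-verified Lean document; each statement's English description precedes it below -/
import Mathlib

section
/- Continuity of entropy in (u,v). Let k ≥ 2 and let u, v ∈ A^ℕ satisfy u ≼ σⁿu ≼ v and u ≼ σⁿv ≼ v for all n ≥ 0. For every ε > 0 there exists N such that for every pair u′, v′ ∈ A^ℕ satisfying u′ ≼ σⁿu′ ≼ v′ and u′ ≼ σⁿv′ ≼ v′ for all n ≥ 0, if u′ₘ = uₘ and v′ₘ = vₘ for all m < N, then |h(Σ(u′,v′)) − h(Σ(u,v))| ≤ ε. -/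
open Filter Set

/-- The shift map on one-sided sequences. -/
def shft (x : ℕ → ℕ) : ℕ → ℕ := fun n => x (n + 1)

/-- Strict lexicographic order on one-sided sequences:
`x ≺ y` iff they differ and `x m < y m` at the first index `m` where they differ. -/
def lexLt (x y : ℕ → ℕ) : Prop := ∃ m, (∀ i, i < m → x i = y i) ∧ x m < y m

/-- Lexicographic order `x ≼ y` on one-sided sequences. -/
def lexLe (x y : ℕ → ℕ) : Prop := x = y ∨ lexLt x y

/-- The map `φ̄^{α,β} : ℝ → [0,1]`:  `0` for `t ≤ α`, `(t-α)/β` for `α ≤ t ≤ α+β`,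
`1` for `t ≥ α+β`. -/
noncomputable def phiB (α β t : ℝ) : ℝ :=
  if t ≤ α then 0 else if α + β ≤ t then 1 else (t - α) / β

/-- `φ̄ₙ^{α,β}(x) = φ̄^{α,β}(x₀ + φ̄^{α,β}(x₁ + ⋯ + φ̄^{α,β}(x_{n-1})⋯))`. -/
noncomputable def phiBN (α β : ℝ) : ℕ → (ℕ → ℕ) → ℝ
  | 0, _ => 0
  | n + 1, x => phiB α β (x 0 + phiBN α β n (shft x))

/-- `φ̄_∞^{α,β}(x) = limₙ φ̄ₙ^{α,β}(x)`; the sequence `φ̄ₙ^{α,β}(x)` is nondecreasing in `n`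
and bounded, so its limit is its supremum. -/
noncomputable def phiBInf (α β : ℝ) (x : ℕ → ℕ) : ℝ := ⨆ n, phiBN α β n x

/-- `T̂_{α,β}(x) = βx + α − ⌊βx + α⌋`. -/
noncomputable def Tlow (α β x : ℝ) : ℝ := β * x + α - ⌊β * x + α⌋

/-- `Ť_{α,β}(x) = βx + α + 1 − ⌈βx + α⌉`. -/
noncomputable def Thigh (α β x : ℝ) : ℝ := β * x + α + 1 - ⌈β * x + α⌉

/-- `k = ⌈α + β⌉`, the size of the alphabet `A = {0, …, k-1}`. -/
noncomputable def kAB (α β : ℝ) : ℕ := (⌈α + β⌉).toNat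

/-- The string `u^{α,β}`, the coding of the orbit of `0`:
`u^{α,β}ₙ = ⌊β T̂ⁿ_{α,β}(0) + α⌋`. -/
noncomputable def uItin (α β : ℝ) : ℕ → ℕ := fun n => (⌊β * (Tlow α β)^[n] 0 + α⌋).toNat

/-- The string `v^{α,β}`, the coding of the orbit of `1`:
`v^{α,β}ₙ = ⌈β Ťⁿ_{α,β}(1) + α⌉ − 1`. -/
noncomputable def vItin (α β : ℝ) : ℕ → ℕ := fun n => (⌈β * (Thigh α β)^[n] 1 + α⌉ - 1).toNat

/-- The shift space `Σ(u,v) = {x ∈ A^ℕ : u ≼ σⁿx ≼ v for all n ≥ 0}`, `A = {0,…,k-1}`. -/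
def SigSet (k : ℕ) (u v : ℕ → ℕ) : Set (ℕ → ℕ) :=
  {x | (∀ i, x i < k) ∧ ∀ n, lexLe u (shft^[n] x) ∧ lexLe (shft^[n] x) v}

/-- The number of words of length `n` in the language of `Σ(u,v)` (prefixes of elements). -/
noncomputable def nWords (k : ℕ) (u v : ℕ → ℕ) (n : ℕ) : ℕ :=
  Nat.card {w : Fin n → ℕ // ∃ x ∈ SigSet k u v, ∀ i : Fin n, x i.1 = w i}

/-- The topological entropy (base 2) of `Σ(u,v)`:
`h = limₙ (1/n) log₂ card(Lₙ)` (the limit exists by subadditivity, so it equals the limsup;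
it is `0` when `Σ(u,v) = ∅`). -/
noncomputable def entS (k : ℕ) (u v : ℕ → ℕ) : ℝ :=
  Filter.limsup (fun n : ℕ => Real.logb 2 (nWords k u v n) / (n : ℝ)) Filter.atTop

/-- Concatenation of the word `w₀ ⋯ w_{p-1}` (the first `p` letters of `w`) with the
string `y`. -/
def wcat (p : ℕ) (w y : ℕ → ℕ) : ℕ → ℕ := fun n => if n < p then w n else y (n - p)

/-!
If `u` and `v` lie in `Σ(u,v)`, a word `cw` belongs to its language exactly when `w` does and `cw`
lies between the prefixes of `u` and `v`. Counting words below a given one turns this into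
`Wₙ = 1 + ∑ₚ (vₚ - uₚ) Wₙ₋₁₋ₚ` for the number `Wₙ` of words of length `n`. Hence `W₀, …, W_N` depend
only on the first `N` letters of `u` and `v`, and `S(t) ∑ Wₙ tⁿ = 1 / (1 - t)` for the kneading
series `S(t) = 1 + ∑ₚ (uₚ - vₚ) tᵖ⁺¹`.

Since the entropy `h` is the infimum of `log₂ Wₙ / n`, it is upper semicontinuous. For lower
semicontinuity, suppose that pairs agreeing with `(u, v)` on ever longer prefixes have entropy at
most `c < h`, and let `2^{-h} < ρ < 2^{-c}`. Their generating functions converge at `ρ` to values at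
least `N + 1`, because `Wₙ ρⁿ ≥ 1` for `n ≤ N`, so their kneading series tend to `0` at `ρ`; they
also tend to `S(ρ)`. Thus the analytic function `S` vanishes on an interval, contradicting
`S(0) = 1`.
-/

open Finset.HasAntidiagonal (antidiagonal mem_antidiagonal)
open scoped Topology

/-! ### Power series with bounded coefficients -/

section PowerSeries

variable {𝕜 : Type*} [NormedField 𝕜] {a : ℕ → 𝕜} {K : ℝ} {t : 𝕜}

lemma summable_norm_mul_pow_of_norm_le (ha : ∀ n, ‖a n‖ ≤ K) (ht : ‖t‖ < 1) :
    Summable fun n => ‖a n * t ^ n‖ := by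
  refine .of_nonneg_of_le (fun _ => norm_nonneg _) (fun n => ?_)
    ((summable_geometric_of_lt_one (norm_nonneg t) ht).mul_left K)
  rw [norm_mul, norm_pow]
  gcongr
  exact ha n

lemma norm_tsum_mul_pow_le (ha : ∀ n, ‖a n‖ ≤ K) (ht : ‖t‖ < 1) {N : ℕ}
    (hN : ∀ n < N, a n = 0) : ‖∑' n, a n * t ^ n‖ ≤ K * ‖t‖ ^ N / (1 - ‖t‖) := by
  have hsupp : Function.support (fun n => a n * t ^ n) ⊆ Set.range (· + N) := fun n hn =>
    ⟨n - N, Nat.sub_add_cancel (not_lt.mp fun h => hn (by simp [hN n h]))⟩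
  rw [← (add_left_injective N).tsum_eq hsupp, div_eq_mul_inv]
  refine tsum_of_norm_bounded
    ((hasSum_geometric_of_lt_one (norm_nonneg t) ht).mul_left (K * ‖t‖ ^ N)) fun n => ?_
  calc ‖a (n + N) * t ^ (n + N)‖ = ‖a (n + N)‖ * (‖t‖ ^ N * ‖t‖ ^ n) := by
        rw [norm_mul, norm_pow, pow_add, mul_comm (‖t‖ ^ n)]
    _ ≤ K * (‖t‖ ^ N * ‖t‖ ^ n) := by gcongr; exact ha _
    _ = K * ‖t‖ ^ N * ‖t‖ ^ n := (mul_assoc ..).symm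

lemma tsum_mul_pow_mul_tsum_mul_pow [CompleteSpace 𝕜] {b c : ℕ → 𝕜}
    (ha : Summable fun n => ‖a n * t ^ n‖) (hb : Summable fun n => ‖b n * t ^ n‖)
    (hc : ∀ n, ∑ p ∈ antidiagonal n, a p.1 * b p.2 = c n) :
    (∑' n, a n * t ^ n) * ∑' n, b n * t ^ n = ∑' n, c n * t ^ n := by
  rw [tsum_mul_tsum_eq_tsum_sum_antidiagonal_of_summable_norm ha hb]
  refine tsum_congr fun n => ?_
  rw [← hc n, Finset.sum_mul]
  refine Finset.sum_congr rfl fun p hp => ?_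
  rw [← mem_antidiagonal.mp hp, pow_add, mul_mul_mul_comm]

lemma exists_mem_Ioo_tsum_mul_pow_ne_zero {a : ℕ → ℝ} (ha : ∀ n, |a n| ≤ K) (ha0 : a ≠ 0)
    {r s : ℝ} (hr : -1 ≤ r) (hrs : r < s) (hs : s ≤ 1) :
    ∃ ρ ∈ Ioo r s, ∑' n, a n * ρ ^ n ≠ 0 := by
  by_contra! hzero
  let p := FormalMultilinearSeries.ofScalars ℝ a
  have hp : ∀ t, p.sum t = ∑' n, a n * t ^ n := FormalMultilinearSeries.ofScalars_sum_eq a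
  have hradius : 1 ≤ p.radius := by
    refine p.le_radius_of_bound (r := 1) K fun n => ?_
    simpa [p, FormalMultilinearSeries.ofScalars_norm] using ha n
  have hball := p.hasFPowerSeriesOnBall (one_pos.trans_le hradius)
  have hunit : Metric.ball (0 : ℝ) 1 ⊆ Metric.eball 0 p.radius := by
    rw [← NNReal.coe_one, ← Metric.eball_coe]
    exact Metric.eball_subset_eball hradius
  obtain ⟨m, hrm, hms⟩ := exists_between hrs
  have hm : m ∈ Metric.ball (0 : ℝ) 1 := by
    rw [mem_ball_zero_iff, Real.norm_eq_abs, abs_lt]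
    exact ⟨hr.trans_lt hrm, hms.trans_le hs⟩
  have hsum_zero : EqOn p.sum 0 (Metric.ball 0 1) := by
    refine (hball.analyticOnNhd.mono hunit).eqOn_zero_of_preconnected_of_eventuallyEq_zero
      (convex_ball 0 1).isPreconnected hm ?_
    filter_upwards [Ioo_mem_nhds hrm hms] with t ht
    exact (hp t).trans (hzero t ht)
  have hp0 : p = 0 := (hball.hasFPowerSeriesAt.congr
    (hsum_zero.eventuallyEq_of_mem (Metric.ball_mem_nhds 0 one_pos))).eq_zero
  exact ha0 ((FormalMultilinearSeries.ofScalars_series_eq_zero ℝ).mp hp0)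

lemma summable_mul_pow_of_tendsto_logb {a : ℕ → ℝ} {b h t : ℝ} (hb : 1 < b) (ha : ∀ n, 0 < a n)
    (hlim : Tendsto (fun n : ℕ => Real.logb b (a n) / n) atTop (𝓝 h)) (ht0 : 0 ≤ t)
    (ht : t < b ^ (-h)) : Summable fun n => a n * t ^ n := by
  have hb0 : 0 < b := one_pos.trans hb
  obtain ⟨c, htc, hhc : h < c⟩ : ∃ c, t < b ^ (-c) ∧ h < c := by
    have hcont : Continuous fun c : ℝ => b ^ (-c) :=
      continuous_const.rpow continuous_neg fun _ => .inl hb0.ne'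
    exact (((hcont.tendsto h).eventually_const_lt ht).filter_mono nhdsWithin_le_nhds |>.and
      (self_mem_nhdsWithin (s := Ioi h))).exists
  have hq : b ^ c * t < 1 := by
    calc b ^ c * t < b ^ c * b ^ (-c) := by gcongr
      _ = 1 := by rw [← Real.rpow_add hb0, add_neg_cancel, Real.rpow_zero]
  refine summable_of_isBigO_nat (summable_geometric_of_lt_one (by positivity) hq)
    (.of_norm_eventuallyLE ?_)
  filter_upwards [hlim.eventually_lt_const hhc, eventually_gt_atTop 0] with n hn hn0
  have hle : a n ≤ (b ^ c) ^ n := by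
    rw [← Real.rpow_mul_natCast hb0.le, ← Real.logb_le_iff_le_rpow hb (ha n)]
    exact ((div_lt_iff₀ (Nat.cast_pos.mpr hn0)).mp hn).le
  rw [Real.norm_of_nonneg (mul_nonneg (ha n).le (pow_nonneg ht0 n)), mul_pow]
  gcongr

end PowerSeries

/-! ### Words -/

/-- The prefix `x₀ ⋯ x_{n-1}` of length `n` of the string `x`. It is encoded as a list so that words
carry the lexicographic order of `List ℕ`. -/
def word (n : ℕ) (x : ℕ → ℕ) : List ℕ := List.ofFn fun i : Fin n => x i

lemma word_succ (n : ℕ) (x : ℕ → ℕ) : word (n + 1) x = x 0 :: word n (shft x) := by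
  simp [word, List.ofFn_succ, shft]

lemma shft_iterate_apply (m : ℕ) (x : ℕ → ℕ) (i : ℕ) : shft^[m] x i = x (m + i) := by
  induction m generalizing x with
  | zero => simp
  | succ m ih => rw [Function.iterate_succ_apply, ih, shft, Nat.add_right_comm]

lemma word_add (m n : ℕ) (x : ℕ → ℕ) : word (m + n) x = word m x ++ word n (shft^[m] x) := by
  simp [word, List.ofFn_add, shft_iterate_apply]

lemma word_lt_word_iff {n : ℕ} {x y : ℕ → ℕ} :
    word n x < word n y ↔ ∃ m < n, (∀ i < m, x i = y i) ∧ x m < y m := by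
  simp only [word, List.lt_iff_exists, List.length_ofFn, lt_irrefl, and_false, false_or,
    List.getElem_ofFn, exists_prop, and_self_left]

lemma lexLe_of_word_lt_word {n : ℕ} {x y : ℕ → ℕ} (h : word n x < word n y) : lexLe x y := by
  obtain ⟨m, -, hm⟩ := word_lt_word_iff.mp h
  exact .inr ⟨m, hm⟩

lemma word_le_word_of_lexLe {x y : ℕ → ℕ} (h : lexLe x y) (n : ℕ) : word n x ≤ word n y := by
  rcases h with rfl | ⟨m, heq, hlt⟩
  · exact le_rfl
  · refine not_lt.mp fun hyx => ?_
    obtain ⟨j, -, heq', hlt'⟩ := word_lt_word_iff.mp hyx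
    rcases lt_trichotomy j m with hj | rfl | hj
    · exact hlt'.ne' (heq j hj)
    · exact hlt.asymm hlt'
    · exact hlt.ne' (heq' m hj)

lemma shft_wcat_one (w y : ℕ → ℕ) : shft (wcat 1 w y) = y := by
  funext n
  simp [shft, wcat]

lemma word_wcat_one (n : ℕ) (w y : ℕ → ℕ) : word (n + 1) (wcat 1 w y) = w 0 :: word n y := by
  rw [word_succ, shft_wcat_one]
  rfl

/-! ### The language of `Σ(u,v)` -/

section Language

variable {k : ℕ} {u v : ℕ → ℕ}

lemma mapsTo_shft_SigSet : MapsTo shft (SigSet k u v) (SigSet k u v) := fun _ hx =>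
  ⟨fun i => hx.1 (i + 1), fun n => hx.2 (n + 1)⟩

lemma wcat_one_mem_SigSet {w y : ℕ → ℕ} (hw : w 0 < k) (hy : y ∈ SigSet k u v)
    (hu : lexLe u (wcat 1 w y)) (hv : lexLe (wcat 1 w y) v) : wcat 1 w y ∈ SigSet k u v := by
  refine ⟨fun i => ?_, fun n => ?_⟩
  · cases i with
    | zero => exact hw
    | succ i => exact hy.1 i
  · cases n with
    | zero => exact ⟨hu, hv⟩
    | succ n =>
      rw [Function.iterate_succ_apply, shft_wcat_one]
      exact hy.2 n

lemma finite_image_word_SigSet (k : ℕ) (u v : ℕ → ℕ) (n : ℕ) :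
    (word n '' SigSet k u v).Finite := by
  refine ((Set.Finite.pi fun _ : Fin n => finite_Iio k).image List.ofFn).subset ?_
  rintro _ ⟨x, hx, rfl⟩
  exact ⟨fun i => x i, fun i _ => hx.1 i, rfl⟩

/-- The words of length `n` in the language of `Σ(u,v)`, i.e. the prefixes of its elements. -/
noncomputable def language (k : ℕ) (u v : ℕ → ℕ) (n : ℕ) : Finset (List ℕ) :=
  (finite_image_word_SigSet k u v n).toFinset

lemma mem_language {n : ℕ} {l : List ℕ} :
    l ∈ language k u v n ↔ ∃ x ∈ SigSet k u v, word n x = l := by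
  simp only [language, Finite.mem_toFinset, mem_image]

lemma nWords_eq_card_language (k : ℕ) (u v : ℕ → ℕ) (n : ℕ) :
    nWords k u v n = (language k u v n).card := by
  have himage : List.ofFn '' {w : Fin n → ℕ | ∃ x ∈ SigSet k u v, ∀ i : Fin n, x i = w i} =
      language k u v n := by
    ext l
    simp only [mem_image, mem_ofPred_eq, Finset.mem_coe, mem_language]
    constructor
    · rintro ⟨w, ⟨x, hx, hxw⟩, rfl⟩
      exact ⟨x, hx, congrArg List.ofFn (funext hxw)⟩
    · rintro ⟨x, hx, rfl⟩
      exact ⟨fun i => x i, ⟨x, hx, fun _ => rfl⟩, rfl⟩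
  rw [← ncard_coe_finset, ← himage, ncard_image_of_injective _ List.ofFn_injective]
  rfl

lemma one_le_nWords (hne : (SigSet k u v).Nonempty) (n : ℕ) : 1 ≤ nWords k u v n := by
  obtain ⟨x, hx⟩ := hne
  rw [nWords_eq_card_language, Nat.one_le_iff_ne_zero, Finset.card_ne_zero]
  exact ⟨word n x, mem_language.mpr ⟨x, hx, rfl⟩⟩

lemma nWords_add_le_mul (k : ℕ) (u v : ℕ → ℕ) (m n : ℕ) :
    nWords k u v (m + n) ≤ nWords k u v m * nWords k u v n := by
  simp only [nWords_eq_card_language]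
  refine (Finset.card_le_card fun l hl => ?_).trans (Finset.card_image₂_le (· ++ ·) _ _)
  obtain ⟨x, hx, rfl⟩ := mem_language.mp hl
  rw [word_add]
  exact Finset.mem_image₂_of_mem (mem_language.mpr ⟨x, hx, rfl⟩)
    (mem_language.mpr ⟨_, mapsTo_shft_SigSet.iterate m hx, rfl⟩)

end Language

/-! ### Entropy as a growth rate -/

section Entropy

variable {k : ℕ} {u v : ℕ → ℕ}

lemma cast_nWords_pos (hne : (SigSet k u v).Nonempty) (n : ℕ) : (0 : ℝ) < nWords k u v n :=
  Nat.cast_pos.mpr (one_le_nWords hne n)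

lemma subadditive_logb_nWords (hne : (SigSet k u v).Nonempty) :
    Subadditive fun n => Real.logb 2 (nWords k u v n) := by
  intro m n
  rw [← Real.logb_mul (cast_nWords_pos hne m).ne' (cast_nWords_pos hne n).ne']
  refine Real.logb_le_logb_of_le one_lt_two (cast_nWords_pos hne _) ?_
  exact_mod_cast nWords_add_le_mul k u v m n

lemma logb_nWords_div_nonneg (hne : (SigSet k u v).Nonempty) (n : ℕ) :
    0 ≤ Real.logb 2 (nWords k u v n) / n :=
  div_nonneg (Real.logb_nonneg one_lt_two (Nat.one_le_cast.mpr (one_le_nWords hne n)))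
    n.cast_nonneg

lemma bddBelow_range_logb_nWords_div (hne : (SigSet k u v).Nonempty) :
    BddBelow (range fun n : ℕ => Real.logb 2 (nWords k u v n) / n) :=
  ⟨0, forall_mem_range.mpr (logb_nWords_div_nonneg hne)⟩

lemma entS_eq_lim (hne : (SigSet k u v).Nonempty) :
    entS k u v = (subadditive_logb_nWords hne).lim :=
  ((subadditive_logb_nWords hne).tendsto_lim (bddBelow_range_logb_nWords_div hne)).limsup_eq

lemma tendsto_logb_nWords_div (hne : (SigSet k u v).Nonempty) :
    Tendsto (fun n : ℕ => Real.logb 2 (nWords k u v n) / n) atTop (𝓝 (entS k u v)) :=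
  entS_eq_lim hne ▸
    (subadditive_logb_nWords hne).tendsto_lim (bddBelow_range_logb_nWords_div hne)

lemma entS_le_logb_nWords_div (hne : (SigSet k u v).Nonempty) {n : ℕ} (hn : n ≠ 0) :
    entS k u v ≤ Real.logb 2 (nWords k u v n) / n :=
  entS_eq_lim hne ▸
    (subadditive_logb_nWords hne).lim_le_div (bddBelow_range_logb_nWords_div hne) hn

lemma entS_nonneg (hne : (SigSet k u v).Nonempty) : 0 ≤ entS k u v :=
  ge_of_tendsto' (tendsto_logb_nWords_div hne) (logb_nWords_div_nonneg hne)

lemma rpow_neg_entS_le_one (hne : (SigSet k u v).Nonempty) : (2 : ℝ) ^ (-entS k u v) ≤ 1 :=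
  Real.rpow_le_one_of_one_le_of_nonpos one_le_two (neg_nonpos.mpr (entS_nonneg hne))

lemma rpow_entS_pow_le_nWords (hne : (SigSet k u v).Nonempty) (n : ℕ) :
    ((2 : ℝ) ^ entS k u v) ^ n ≤ nWords k u v n := by
  rcases eq_or_ne n 0 with rfl | hn
  · simpa using one_le_nWords hne 0
  · rw [← Real.rpow_mul_natCast zero_le_two,
      ← Real.le_logb_iff_rpow_le one_lt_two (cast_nWords_pos hne n),
      ← le_div_iff₀ (Nat.cast_pos.mpr hn.bot_lt)]
    exact entS_le_logb_nWords_div hne hn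

lemma summable_nWords_mul_pow (hne : (SigSet k u v).Nonempty) {t : ℝ} (ht0 : 0 ≤ t)
    (ht : t < 2 ^ (-entS k u v)) : Summable fun n => (nWords k u v n : ℝ) * t ^ n :=
  summable_mul_pow_of_tendsto_logb one_lt_two (cast_nWords_pos hne)
    (tendsto_logb_nWords_div hne) ht0 ht

end Entropy

/-! ### Admissible pairs -/

/-- A pair of strings over the alphabet `{0, …, k-1}` with `u ≼ σⁿu ≼ v` and `u ≼ σⁿv ≼ v` for all
`n`, stated as: both strings belong to the shift space that they bound. -/
structure IsAdmissible (k : ℕ) (u v : ℕ → ℕ) : Prop where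
  left_mem : u ∈ SigSet k u v
  right_mem : v ∈ SigSet k u v

/-- The coefficients `1, u₀ - v₀, u₁ - v₁, …` of the kneading series of the pair `(u, v)`. -/
def kneadingCoeff (u v : ℕ → ℕ) : ℕ → ℝ
  | 0 => 1
  | j + 1 => u j - v j

/-- The kneading series `1 + ∑ⱼ (uⱼ - vⱼ) tʲ⁺¹`; up to the factor `1 - t` it is the reciprocal of
the generating function of `nWords`. -/
noncomputable def kneadingSeries (u v : ℕ → ℕ) (t : ℝ) : ℝ := ∑' n, kneadingCoeff u v n * t ^ n

lemma kneadingCoeff_ne_zero (u v : ℕ → ℕ) : kneadingCoeff u v ≠ 0 := fun h =>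
  one_ne_zero (congrFun h 0)

lemma kneadingCoeff_congr {u v u' v' : ℕ → ℕ} {N : ℕ} (h : ∀ m < N, u' m = u m ∧ v' m = v m)
    {n : ℕ} (hn : n ≤ N) : kneadingCoeff u' v' n = kneadingCoeff u v n := by
  cases n with
  | zero => rfl
  | succ n => simp only [kneadingCoeff, h n hn]

/-- The words of length `n` in the language that precede the prefix of `x`. -/
noncomputable def wordsBelow (k : ℕ) (u v : ℕ → ℕ) (n : ℕ) (x : ℕ → ℕ) : Finset (List ℕ) :=
  (language k u v n).filter (· < word n x)

/-- The words `c :: w` of length `n + 1`, with `w` in the language, that precede the prefix of `x`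
(see `cons_mem_extensionsBelow`): either `c < x₀`, or `c = x₀` and `w` precedes `σx`. The words
themselves need not be in the language. -/
noncomputable def extensionsBelow (k : ℕ) (u v : ℕ → ℕ) (n : ℕ) (x : ℕ → ℕ) : Finset (List ℕ) :=
  Finset.image₂ List.cons (Finset.range (x 0)) (language k u v n) ∪
    (wordsBelow k u v n (shft x)).image (List.cons (x 0))

section Counting

variable {k : ℕ} {u v : ℕ → ℕ} {n : ℕ} {x : ℕ → ℕ}

lemma card_extensionsBelow (k : ℕ) (u v : ℕ → ℕ) (n : ℕ) (x : ℕ → ℕ) :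
    (extensionsBelow k u v n x).card =
      x 0 * nWords k u v n + (wordsBelow k u v n (shft x)).card := by
  rw [extensionsBelow, Finset.card_union_of_disjoint,
    Finset.card_image₂ fun _ _ _ _ => List.cons.inj, Finset.card_range,
    Finset.card_image_of_injective _ List.cons_injective, nWords_eq_card_language]
  rw [Finset.disjoint_left]
  intro l hlt heq
  obtain ⟨c, hc, w, -, rfl⟩ := Finset.mem_image₂.mp hlt
  obtain ⟨w', -, hw'⟩ := Finset.mem_image.mp heq
  exact (Finset.mem_range.mp hc).ne (List.cons.inj hw').1.symm

lemma cons_mem_extensionsBelow {c : ℕ} {w : List ℕ} :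
    c :: w ∈ extensionsBelow k u v n x ↔ w ∈ language k u v n ∧ c :: w < word (n + 1) x := by
  simp only [extensionsBelow, wordsBelow, Finset.mem_union, Finset.mem_image₂, Finset.mem_image,
    Finset.mem_filter, Finset.mem_range, List.cons.injEq, word_succ, List.cons_lt_cons_iff]
  aesop

lemma nil_notMem_extensionsBelow : [] ∉ extensionsBelow k u v n x := by
  simp [extensionsBelow]

lemma nil_notMem_language_succ : [] ∉ language k u v (n + 1) := by
  simp [mem_language, word_succ]

lemma extensionsBelow_subset {y : ℕ → ℕ} (h : lexLe y x) :
    extensionsBelow k u v n y ⊆ extensionsBelow k u v n x := by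
  rintro (_ | ⟨c, w⟩) hl
  · exact absurd hl nil_notMem_extensionsBelow
  · rw [cons_mem_extensionsBelow] at hl ⊢
    exact ⟨hl.1, hl.2.trans_le (word_le_word_of_lexLe h _)⟩

namespace IsAdmissible

lemma of_forall (hu : ∀ i, u i < k) (hv : ∀ i, v i < k)
    (h : ∀ n, lexLe u (shft^[n] u) ∧ lexLe (shft^[n] u) v ∧
      lexLe u (shft^[n] v) ∧ lexLe (shft^[n] v) v) : IsAdmissible k u v :=
  ⟨⟨hu, fun n => ⟨(h n).1, (h n).2.1⟩⟩, ⟨hv, fun n => (h n).2.2⟩⟩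

lemma nonempty (h : IsAdmissible k u v) : (SigSet k u v).Nonempty := ⟨u, h.left_mem⟩

/-- A word `c :: w` strictly between the prefixes of `u` and `v` extends to the string `cy` of
`Σ(u,v)`, for `y` extending `w`; the two extreme words are prefixes of `u` and `v` themselves. -/
lemma cons_mem_language_iff (h : IsAdmissible k u v) {c : ℕ} {w : List ℕ} :
    c :: w ∈ language k u v (n + 1) ↔
      w ∈ language k u v n ∧ word (n + 1) u ≤ c :: w ∧ c :: w ≤ word (n + 1) v := by
  constructor
  · intro hcw
    obtain ⟨x, hx, hxw⟩ := mem_language.mp hcw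
    rw [← hxw]
    refine ⟨mem_language.mpr ⟨shft x, mapsTo_shft_SigSet hx, ?_⟩,
      word_le_word_of_lexLe (hx.2 0).1 _, word_le_word_of_lexLe (hx.2 0).2 _⟩
    rw [word_succ] at hxw
    exact (List.cons.inj hxw).2
  · rintro ⟨hw, hle_u, hle_v⟩
    obtain ⟨y, hy, rfl⟩ := mem_language.mp hw
    rw [mem_language]
    rcases hle_u.eq_or_lt with heq_u | hlt_u
    · exact ⟨u, h.left_mem, heq_u⟩
    rcases hle_v.eq_or_lt with heq_v | hlt_v
    · exact ⟨v, h.right_mem, heq_v.symm⟩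
    have hc : c ≤ v 0 := by
      rw [word_succ, List.cons_lt_cons_iff] at hlt_v
      exact hlt_v.elim le_of_lt fun hcv => hcv.1.le
    have hcy : word (n + 1) (wcat 1 (fun _ => c) y) = c :: word n y := word_wcat_one n _ y
    rw [← hcy] at hlt_u hlt_v ⊢
    exact ⟨_, wcat_one_mem_SigSet (hc.trans_lt (h.right_mem.1 0)) hy
      (lexLe_of_word_lt_word hlt_u) (lexLe_of_word_lt_word hlt_v), rfl⟩

lemma wordsBelow_succ (h : IsAdmissible k u v) (hx : lexLe x v) :
    wordsBelow k u v (n + 1) x = extensionsBelow k u v n x \ extensionsBelow k u v n u := by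
  ext (_ | ⟨c, w⟩)
  · simp [wordsBelow, nil_notMem_extensionsBelow, nil_notMem_language_succ]
  · have hxv := word_le_word_of_lexLe hx (n + 1)
    simp only [wordsBelow, Finset.mem_filter, Finset.mem_sdiff, cons_mem_extensionsBelow,
      h.cons_mem_language_iff, not_and, not_lt]
    exact ⟨fun ⟨⟨hw, hu, _⟩, hlt⟩ => ⟨⟨hw, hlt⟩, fun _ => hu⟩,
      fun ⟨⟨hw, hlt⟩, hu⟩ => ⟨⟨hw, hu hw, (hlt.trans_le hxv).le⟩, hlt⟩⟩

lemma card_wordsBelow_succ (h : IsAdmissible k u v) (hux : lexLe u x) (hxv : lexLe x v) :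
    ((wordsBelow k u v (n + 1) x).card : ℝ) = ((x 0 : ℝ) - u 0) * nWords k u v n +
      ((wordsBelow k u v n (shft x)).card - (wordsBelow k u v n (shft u)).card) := by
  rw [h.wordsBelow_succ hxv, Finset.cast_card_sdiff (extensionsBelow_subset hux),
    card_extensionsBelow, card_extensionsBelow]
  push_cast
  ring

lemma card_wordsBelow (h : IsAdmissible k u v) (n : ℕ) (hx : x ∈ SigSet k u v) :
    ((wordsBelow k u v n x).card : ℝ) =
      ∑ p ∈ Finset.range n, ((x p : ℝ) - u p) * nWords k u v (n - (p + 1)) := by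
  induction n generalizing x with
  | zero => simp [wordsBelow, word]
  | succ n ih =>
    obtain ⟨hux, hxv⟩ : lexLe u x ∧ lexLe x v := hx.2 0
    rw [h.card_wordsBelow_succ hux hxv, ih (mapsTo_shft_SigSet hx),
      ih (mapsTo_shft_SigSet h.left_mem), ← Finset.sum_sub_distrib, Finset.sum_range_succ',
      add_comm, Nat.add_sub_cancel]
    congr 1
    refine Finset.sum_congr rfl fun p _ => ?_
    rw [← sub_mul, sub_sub_sub_cancel_right, Nat.add_sub_add_right]
    rfl

lemma nWords_eq_card_wordsBelow_add_one (h : IsAdmissible k u v) (n : ℕ) :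
    nWords k u v n = (wordsBelow k u v n v).card + 1 := by
  have hmax : word n v ∈ language k u v n := mem_language.mpr ⟨v, h.right_mem, rfl⟩
  have hlanguage : language k u v n = insert (word n v) (wordsBelow k u v n v) := by
    ext l
    simp only [wordsBelow, Finset.mem_insert, Finset.mem_filter]
    refine ⟨fun hl => ?_, fun hl => hl.elim (fun heq => heq ▸ hmax) And.left⟩
    obtain ⟨x, hx, rfl⟩ := mem_language.mp hl
    exact (word_le_word_of_lexLe (hx.2 0).2 n).eq_or_lt.imp_right fun hlt => ⟨hl, hlt⟩
  rw [nWords_eq_card_language, hlanguage, Finset.card_insert_of_notMem]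
  simp [wordsBelow]

lemma nWords_eq_one_add_sum (h : IsAdmissible k u v) (n : ℕ) :
    (nWords k u v n : ℝ) =
      1 + ∑ p ∈ Finset.range n, ((v p : ℝ) - u p) * nWords k u v (n - (p + 1)) := by
  rw [h.nWords_eq_card_wordsBelow_add_one, Nat.cast_add_one, h.card_wordsBelow n h.right_mem,
    add_comm]

lemma sum_kneadingCoeff_mul_nWords (h : IsAdmissible k u v) (n : ℕ) :
    ∑ p ∈ antidiagonal n, kneadingCoeff u v p.1 * (nWords k u v p.2 : ℝ) = 1 := by
  rw [Finset.Nat.sum_antidiagonal_eq_sum_range_succ_mk, Finset.sum_range_succ']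
  simp only [kneadingCoeff, Nat.sub_zero, one_mul]
  rw [h.nWords_eq_one_add_sum n, add_left_comm, ← Finset.sum_add_distrib, add_eq_left]
  exact Finset.sum_eq_zero fun p _ => by ring

lemma nWords_congr (h : IsAdmissible k u v) {u' v' : ℕ → ℕ} (h' : IsAdmissible k u' v') {N : ℕ}
    (hagree : ∀ m < N, u' m = u m ∧ v' m = v m) {n : ℕ} (hn : n ≤ N) :
    nWords k u' v' n = nWords k u v n := by
  induction n using Nat.strong_induction_on with
  | _ n ih =>
    rify
    rw [h.nWords_eq_one_add_sum, h'.nWords_eq_one_add_sum]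
    congr 1
    refine Finset.sum_congr rfl fun p hp => ?_
    have hpn : p < n := Finset.mem_range.mp hp
    obtain ⟨hup, hvp⟩ := hagree p (by lia)
    rw [hup, hvp, ih (n - (p + 1)) (by lia) (by lia)]

lemma abs_kneadingCoeff_le (h : IsAdmissible k u v) (n : ℕ) : |kneadingCoeff u v n| ≤ k := by
  cases n with
  | zero => simpa [kneadingCoeff] using Nat.one_le_of_lt (h.left_mem.1 0)
  | succ n =>
    have hun : (u n : ℝ) < k := Nat.cast_lt.mpr (h.left_mem.1 n)
    have hvn : (v n : ℝ) < k := Nat.cast_lt.mpr (h.right_mem.1 n)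
    exact abs_sub_le_of_nonneg_of_le (u n).cast_nonneg hun.le (v n).cast_nonneg hvn.le

lemma summable_norm_kneadingCoeff_mul_pow (h : IsAdmissible k u v) {t : ℝ} (ht : |t| < 1) :
    Summable fun n => ‖kneadingCoeff u v n * t ^ n‖ :=
  summable_norm_mul_pow_of_norm_le h.abs_kneadingCoeff_le ht

lemma kneadingSeries_mul_tsum (h : IsAdmissible k u v) {t : ℝ} (ht0 : 0 ≤ t)
    (ht : t < 2 ^ (-entS k u v)) :
    kneadingSeries u v t * ∑' n, (nWords k u v n : ℝ) * t ^ n = (1 - t)⁻¹ := by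
  have ht1 : t < 1 := ht.trans_le (rpow_neg_entS_le_one h.nonempty)
  have ht_abs : |t| < 1 := by rwa [abs_of_nonneg ht0]
  rw [kneadingSeries, tsum_mul_pow_mul_tsum_mul_pow
    (h.summable_norm_kneadingCoeff_mul_pow ht_abs)
    (summable_nWords_mul_pow h.nonempty ht0 ht).norm h.sum_kneadingCoeff_mul_nWords]
  simp only [one_mul, tsum_geometric_of_lt_one ht0 ht1]

end IsAdmissible

end Counting

/-! ### Semicontinuity of entropy -/

section Semicontinuity

variable {k : ℕ} {u v u' v' : ℕ → ℕ} {N : ℕ} {ρ : ℝ}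

lemma abs_kneadingSeries_sub_le (h : IsAdmissible k u v) (h' : IsAdmissible k u' v')
    (hagree : ∀ m < N, u' m = u m ∧ v' m = v m) (hρ : |ρ| < 1) :
    |kneadingSeries u v ρ - kneadingSeries u' v' ρ| ≤ 2 * k * |ρ| ^ N / (1 - |ρ|) := by
  have hbound (n : ℕ) : |kneadingCoeff u v n - kneadingCoeff u' v' n| ≤ 2 * k := by
    calc |kneadingCoeff u v n - kneadingCoeff u' v' n|
        ≤ |kneadingCoeff u v n| + |kneadingCoeff u' v' n| := abs_sub _ _
      _ ≤ 2 * k := by linarith [h.abs_kneadingCoeff_le n, h'.abs_kneadingCoeff_le n]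
  have htail := norm_tsum_mul_pow_le hbound hρ (N := N) fun n hn =>
    sub_eq_zero.mpr (kneadingCoeff_congr hagree hn.le).symm
  simpa only [kneadingSeries, sub_mul, Real.norm_eq_abs,
    (h.summable_norm_kneadingCoeff_mul_pow hρ).of_norm.tsum_sub
      (h'.summable_norm_kneadingCoeff_mul_pow hρ).of_norm] using htail

lemma one_le_nWords_mul_pow (hne : (SigSet k u v).Nonempty) (hρ : 2 ^ (-entS k u v) ≤ ρ) (n : ℕ) :
    1 ≤ (nWords k u v n : ℝ) * ρ ^ n := by
  calc (1 : ℝ) = (2 ^ entS k u v) ^ n * (2 ^ (-entS k u v)) ^ n := by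
        rw [← mul_pow, ← Real.rpow_add two_pos, add_neg_cancel, Real.rpow_zero, one_pow]
    _ ≤ nWords k u v n * ρ ^ n := by
        gcongr
        exact rpow_entS_pow_le_nWords hne n

lemma add_one_le_tsum_nWords_mul_pow (h : IsAdmissible k u v) (h' : IsAdmissible k u' v')
    (hagree : ∀ m < N, u' m = u m ∧ v' m = v m) (hρ : 2 ^ (-entS k u v) ≤ ρ)
    (hρ' : ρ < 2 ^ (-entS k u' v')) : (N : ℝ) + 1 ≤ ∑' n, (nWords k u' v' n : ℝ) * ρ ^ n := by
  have hρ0 : 0 ≤ ρ := (Real.rpow_nonneg zero_le_two _).trans hρ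
  calc (N : ℝ) + 1 = ∑ _n ∈ Finset.range (N + 1), (1 : ℝ) := by simp
    _ ≤ ∑ n ∈ Finset.range (N + 1), (nWords k u' v' n : ℝ) * ρ ^ n := by
        refine Finset.sum_le_sum fun n hn => ?_
        rw [h.nWords_congr h' hagree (Finset.mem_range_succ_iff.mp hn)]
        exact one_le_nWords_mul_pow h.nonempty hρ n
    _ ≤ ∑' n, (nWords k u' v' n : ℝ) * ρ ^ n :=
        (summable_nWords_mul_pow h'.nonempty hρ0 hρ').sum_le_tsum _ fun n _ => by positivity

lemma one_sub_mul_abs_kneadingSeries_le (h : IsAdmissible k u v) (h' : IsAdmissible k u' v')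
    (hagree : ∀ m < N, u' m = u m ∧ v' m = v m) (hρ : 2 ^ (-entS k u v) ≤ ρ)
    (hρ' : ρ < 2 ^ (-entS k u' v')) :
    (1 - ρ) * |kneadingSeries u v ρ| ≤ 2 * k * ρ ^ N + 1 / ((N : ℝ) + 1) := by
  have hρ0 : 0 ≤ ρ := (Real.rpow_nonneg zero_le_two _).trans hρ
  have hρ1 : 0 < 1 - ρ := sub_pos.mpr (hρ'.trans_le (rpow_neg_entS_le_one h'.nonempty))
  have hclose := abs_kneadingSeries_sub_le h h' hagree (ρ := ρ)
    (by rw [abs_of_nonneg hρ0]; exact sub_pos.mp hρ1)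
  rw [abs_of_nonneg hρ0, le_div_iff₀' hρ1] at hclose
  have hlarge := add_one_le_tsum_nWords_mul_pow h h' hagree hρ hρ'
  have hsmall : (1 - ρ) * |kneadingSeries u' v' ρ| ≤ 1 / ((N : ℝ) + 1) := by
    have hsum_pos := N.cast_add_one_pos.trans_le hlarge
    have hinv : kneadingSeries u' v' ρ =
        (1 - ρ)⁻¹ / ∑' n, (nWords k u' v' n : ℝ) * ρ ^ n :=
      eq_div_of_mul_eq hsum_pos.ne' (h'.kneadingSeries_mul_tsum hρ0 hρ')
    rw [hinv, abs_of_nonneg (by positivity), mul_div_assoc', mul_inv_cancel₀ hρ1.ne']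
    exact one_div_le_one_div_of_le N.cast_add_one_pos hlarge
  calc (1 - ρ) * |kneadingSeries u v ρ|
      ≤ (1 - ρ) * (|kneadingSeries u v ρ - kneadingSeries u' v' ρ| + |kneadingSeries u' v' ρ|) := by
        gcongr
        exact sub_le_iff_le_add.mp (abs_sub_abs_le_abs_sub _ _)
    _ ≤ 2 * k * ρ ^ N + 1 / ((N : ℝ) + 1) := by
        rw [mul_add]
        exact add_le_add hclose hsmall

theorem IsAdmissible.exists_forall_lt_entS (h : IsAdmissible k u v) {c : ℝ}
    (hc : c < entS k u v) : ∃ N : ℕ, ∀ u' v' : ℕ → ℕ, IsAdmissible k u' v' →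
      (∀ m < N, u' m = u m ∧ v' m = v m) → c < entS k u' v' := by
  rcases lt_or_ge c 0 with hc0 | hc0
  · exact ⟨0, fun _ _ h' _ => hc0.trans_le (entS_nonneg h'.nonempty)⟩
  have hradius : (2 : ℝ) ^ (-entS k u v) < 2 ^ (-c) :=
    Real.rpow_lt_rpow_of_exponent_lt one_lt_two (neg_lt_neg hc)
  have hradius_le_one : (2 : ℝ) ^ (-c) ≤ 1 :=
    Real.rpow_le_one_of_one_le_of_nonpos one_le_two (neg_nonpos.mpr hc0)
  have hradius_pos : (0 : ℝ) < 2 ^ (-entS k u v) := Real.rpow_pos_of_pos two_pos _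
  obtain ⟨ρ, ⟨hρ, hρc⟩, hne⟩ := exists_mem_Ioo_tsum_mul_pow_ne_zero h.abs_kneadingCoeff_le
    (kneadingCoeff_ne_zero u v) (by linarith) hradius hradius_le_one
  have hρ1 : ρ < 1 := hρc.trans_le hradius_le_one
  have hlim : Tendsto (fun N : ℕ => 2 * k * ρ ^ N + 1 / ((N : ℝ) + 1)) atTop (𝓝 0) := by
    simpa using ((tendsto_pow_atTop_nhds_zero_of_lt_one (hradius_pos.trans hρ).le hρ1).const_mul
      (2 * k : ℝ)).add tendsto_one_div_add_atTop_nhds_zero_nat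
  obtain ⟨N, hN⟩ := (hlim.eventually_lt_const
    (mul_pos (sub_pos.mpr hρ1) (abs_pos.mpr hne))).exists
  refine ⟨N, fun u' v' h' hagree => not_le.mp fun hle => hN.not_ge ?_⟩
  exact one_sub_mul_abs_kneadingSeries_le h h' hagree hρ.le <|
    hρc.trans_le (Real.rpow_le_rpow_of_exponent_le one_le_two (neg_le_neg hle))

theorem IsAdmissible.exists_forall_entS_lt (h : IsAdmissible k u v) {c : ℝ}
    (hc : entS k u v < c) : ∃ N : ℕ, ∀ u' v' : ℕ → ℕ, IsAdmissible k u' v' →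
      (∀ m < N, u' m = u m ∧ v' m = v m) → entS k u' v' < c := by
  obtain ⟨N, hN, hN0⟩ := (((tendsto_logb_nWords_div h.nonempty).eventually_lt_const hc).and
    (eventually_ne_atTop 0)).exists
  refine ⟨N, fun u' v' h' hagree => (entS_le_logb_nWords_div h'.nonempty hN0).trans_lt ?_⟩
  rwa [h.nWords_congr h' hagree le_rfl]

end Semicontinuity

/-- **Continuity of entropy in `(u,v)`.** Let `k ≥ 2` and let `u, v ∈ A^ℕ` satisfy
`u ≼ σⁿu ≼ v` and `u ≼ σⁿv ≼ v` for all `n ≥ 0`. For every `ε > 0` there exists `N`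
such that for every pair `u′, v′ ∈ A^ℕ` satisfying the same conditions, if `u′` and `u`
(resp. `v′` and `v`) agree on the first `N` letters, then
`|h(Σ(u′,v′)) − h(Σ(u,v))| ≤ ε`. -/
theorem entropy_continuous_in_uv (k : ℕ) (hk : 2 ≤ k) (u v : ℕ → ℕ)
    (hu : ∀ i, u i < k) (hv : ∀ i, v i < k)
    (hcond : ∀ n, lexLe u (shft^[n] u) ∧ lexLe (shft^[n] u) v ∧
                  lexLe u (shft^[n] v) ∧ lexLe (shft^[n] v) v) :
    ∀ ε : ℝ, 0 < ε → ∃ N : ℕ, ∀ u' v' : ℕ → ℕ,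
      (∀ i, u' i < k) → (∀ i, v' i < k) →
      (∀ n, lexLe u' (shft^[n] u') ∧ lexLe (shft^[n] u') v' ∧
            lexLe u' (shft^[n] v') ∧ lexLe (shft^[n] v') v') →
      (∀ m, m < N → u' m = u m ∧ v' m = v m) →
      |entS k u' v' - entS k u v| ≤ ε := by
  intro ε hε
  have h : IsAdmissible k u v := .of_forall hu hv hcond
  obtain ⟨N₁, hN₁⟩ := h.exists_forall_lt_entS (sub_lt_self _ hε)
  obtain ⟨N₂, hN₂⟩ := h.exists_forall_entS_lt (lt_add_of_pos_right _ hε)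
  refine ⟨max N₁ N₂, fun u' v' hu' hv' hcond' hagree => ?_⟩
  have h' : IsAdmissible k u' v' := .of_forall hu' hv' hcond'
  have hlower := hN₁ u' v' h' fun m hm => hagree m (lt_max_of_lt_left hm)
  have hupper := hN₂ u' v' h' fun m hm => hagree m (lt_max_of_lt_right hm)
  exact abs_sub_le_iff.mpr ⟨by linarith, by linarith⟩
end

section
/- Entropy equality for the two periodic modifications. Let k ≥ 2, p ≥ 2, q ≥ 2; let a be a word of length p over A with a₀ = 0 and b a word of length q over A with b₀ = k−1; let u := a^∞ and v := b^∞ (periodic strings), and assume p is the minimal period of u and q is the minimal period of v; assume u ≼ σⁿu ≼ v and u ≼ σⁿv ≼ v for all n ≥ 0, and a_{p−1} ≥ 1, b_{q−1} ≤ k−2 (the last two hold automatically). Set a′ := a₀⋯a_{p−2}(a_{p−1}−1), b′ := b₀⋯b_{q−2}(b_{q−1}+1), u* := a′⌢b^∞ and v* := b′⌢a^∞ (⌢ is concatenation). If h(Σ(u,v)) > 0, then h(Σ(u,v)) = h(Σ(u*,v*)). -/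
open Filter Set

/-!
Write `A(u, v)` for the set of strings all of whose tails lie between the periodic strings `u` and
`v`, and let `w₀`, `w₁` be their period words.

If a nonempty set of strings is closed under prepending either of two words `c₀`, `c₁` with
different first letters, then every exponential rate `L` that bounds its number of prefixes
satisfies the Kraft inequality `L ^ -|c₀| + L ^ -|c₁| ≤ 1`. The key dichotomy is that `A(u, v)`
either grows subexponentially or satisfies the Kraft inequality for the period words themselves.
For binary strings the pair `(u, v)` is desubstituted, which shortens the periods, until either
the growth is visibly subexponential or there are two free words that are no longer than the
periods. A letter strictly between the first letters of `u` and `v` gives the free words directly,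
except when it is the only one and the bounds lie deep; coding binary strings by their transitions
reduces this case to the binary one.

A string between the modified bounds follows `A(u, v)` up to some point and continues with a
concatenation of period words, modified or not, where a modified word switches from one period to
the other. The weights `L ^ -|w₀|` and `L ^ -|w₁|` turn this into a two-state recursion, and the
Kraft inequality keeps its solutions in `O(L ^ n)`. So the modification does not raise the entropy
unless `A(u, v)` grows subexponentially, which positive entropy excludes.
-/

namespace LexShift

open scoped Stream' Asymptotics

variable {α β : Type*}

/-- Infinite strings carry the lexicographic order. -/
noncomputable instance [LinearOrder α] : LinearOrder (Stream' α) :=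
  inferInstanceAs (LinearOrder (Lex (ℕ → α)))

/-- `SideLE false` is `≤` and `SideLE true` is `≥`: `SideLE e a b` says that `b` respects the
bound `a` on the side `e`, where `false` stands for lower and `true` for upper bounds. -/
def SideLE {γ : Type*} [LE γ] (e : Bool) (a b : γ) : Prop := cond e (b ≤ a) (a ≤ b)

/-- The strict version of `SideLE`. -/
def SideLT {γ : Type*} [LT γ] (e : Bool) (a b : γ) : Prop := cond e (b < a) (a < b)

section LinearOrder

variable {γ : Type*} [LinearOrder γ] {e : Bool} {a b c : γ}

lemma sideLE_refl (e : Bool) (a : γ) : SideLE e a a := by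
  cases e <;> exact le_refl a

lemma SideLE.trans (hab : SideLE e a b) (hbc : SideLE e b c) : SideLE e a c := by
  cases e
  exacts [le_trans hab hbc, le_trans hbc hab]

lemma SideLT.trans (hab : SideLT e a b) (hbc : SideLT e b c) : SideLT e a c := by
  cases e
  exacts [lt_trans hab hbc, lt_trans hbc hab]

lemma SideLE.antisymm (hab : SideLE e a b) (hba : SideLE e b a) : a = b := by
  cases e
  exacts [le_antisymm hab hba, le_antisymm hba hab]

lemma SideLT.le (h : SideLT e a b) : SideLE e a b := by
  cases e <;> exact le_of_lt h

lemma not_sideLE : ¬ SideLE e a b ↔ SideLT e b a := by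
  cases e <;> exact not_le

lemma not_sideLT : ¬ SideLT e a b ↔ SideLE e b a := by
  cases e <;> exact not_lt

lemma sideLE_iff_eq_or_sideLT : SideLE e a b ↔ a = b ∨ SideLT e a b := by
  cases e
  exacts [le_iff_eq_or_lt, le_iff_eq_or_lt.trans (or_congr eq_comm Iff.rfl)]

@[simp]
lemma sideLE_not : SideLE (!e) a b ↔ SideLE e b a := by
  cases e <;> exact Iff.rfl

@[simp]
lemma sideLT_not : SideLT (!e) a b ↔ SideLT e b a := by
  cases e <;> exact Iff.rfl

end LinearOrder

@[simp]
lemma sideLT_bool {e a b : Bool} : SideLT e a b ↔ a = e ∧ b = !e := by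
  cases e <;> cases a <;> cases b <;> simp [SideLT]

lemma take_eq_take_iff {x y : Stream' α} {m : ℕ} :
    x.take m = y.take m ↔ ∀ i < m, x.get i = y.get i := by
  induction m with
  | zero => simp
  | succ m ih =>
    rw [Stream'.take_succ', Stream'.take_succ', Nat.forall_lt_succ_right, ← ih,
      List.append_singleton_inj]

lemma take_eq_take_of_le {x y : Stream' α} {m n : ℕ} (hmn : m ≤ n) (h : x.take n = y.take n) :
    x.take m = y.take m :=
  take_eq_take_iff.2 fun i hi => take_eq_take_iff.1 h i (hi.trans_le hmn)

lemma map_take_eq (g : α → β) {n : ℕ} {x y : Stream' α} (h : x.take n = y.take n) :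
    (x.map g).take n = (y.map g).take n :=
  take_eq_take_iff.2 fun i hi => congrArg g (take_eq_take_iff.1 h i hi)

lemma exists_take_eq_get_ne {x y : Stream' α} (h : x ≠ y) :
    ∃ m, x.take m = y.take m ∧ x.get m ≠ y.get m := by
  classical
  have hex : ∃ m, x.get m ≠ y.get m := by
    by_contra! hall
    exact h (Stream'.ext hall)
  exact ⟨Nat.find hex, take_eq_take_iff.2 fun i hi => not_not.1 (Nat.find_min hex hi),
    Nat.find_spec hex⟩

lemma eq_append_drop_of_take_eq {x y : Stream' α} {m : ℕ} (h : x.take m = y.take m) :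
    x = y.take m ++ₛ x.drop m := by
  rw [← h, Stream'.append_take_drop]

lemma drop_length_append (w : List α) (n : ℕ) (x : Stream' α) :
    (w ++ₛ x).drop (w.length + n) = x.drop n := by
  rw [← Stream'.drop_drop, Stream'.drop_append_stream]

section Lex

variable [LinearOrder α] {e : Bool} {a b : α} {x y : Stream' α}

lemma stream_lt_iff : x < y ↔ ∃ m, (∀ i < m, x.get i = y.get i) ∧ x.get m < y.get m :=
  Iff.rfl

lemma sideLT_iff_exists_take :
    SideLT e x y ↔ ∃ m, x.take m = y.take m ∧ SideLT e (x.get m) (y.get m) := by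
  simp only [take_eq_take_iff]
  cases e
  · exact stream_lt_iff
  · exact stream_lt_iff.trans (by simp only [eq_comm]; rfl)

lemma sideLT_cons : SideLT e (a :: x) (b :: y) ↔ SideLT e a b ∨ a = b ∧ SideLT e x y := by
  simp only [sideLT_iff_exists_take]
  constructor
  · rintro ⟨m, htake, hlt⟩
    cases m with
    | zero => exact .inl hlt
    | succ m =>
      simp only [Stream'.take_succ_cons, List.cons.injEq] at htake
      exact .inr ⟨htake.1, m, htake.2, hlt⟩
  · rintro (hlt | ⟨rfl, m, htake, hlt⟩)
    · exact ⟨0, rfl, hlt⟩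
    · exact ⟨m + 1, by simp only [Stream'.take_succ_cons, htake], hlt⟩

lemma sideLE_cons : SideLE e (a :: x) (b :: y) ↔ SideLT e a b ∨ a = b ∧ SideLE e x y := by
  simp only [sideLE_iff_eq_or_sideLT, sideLT_cons, Stream'.cons_injective2.eq_iff]
  tauto

lemma SideLE.head (h : SideLE e x y) : SideLE e x.head y.head := by
  rw [← x.eta, ← y.eta, sideLE_cons] at h
  exact h.elim SideLT.le fun hxy => hxy.1 ▸ sideLE_refl e _

lemma SideLT.of_head (h : SideLT e x.head y.head) : SideLT e x y := by
  rw [← x.eta, ← y.eta, sideLT_cons]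
  exact .inl h

lemma SideLE.tail (h : SideLE e x y)
    (hhead : x.head = y.head) : SideLE e x.tail y.tail := by
  rw [← x.eta, ← y.eta, sideLE_cons, hhead] at h
  exact (h.resolve_left (not_sideLT.2 (sideLE_refl e _))).2

lemma sideLE_append_iff (w : List α) : SideLE e (w ++ₛ x) (w ++ₛ y) ↔ SideLE e x y := by
  induction w with
  | nil => exact Iff.rfl
  | cons a w ih =>
    rw [Stream'.cons_append_stream, Stream'.cons_append_stream, sideLE_cons, ih]
    simp [SideLT, Bool.cond_self]

end Lex

/-- The number of prefixes of length `n` of strings in `A` is `O(L ^ n)`. The prefixes are counted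
by a finite set of words that contains them all, so that no finiteness has to be assumed. -/
def GrowthLE (A : Set (Stream' α)) (L : ℝ) : Prop :=
  ∃ C : ℝ, 0 ≤ C ∧
    ∀ n, ∃ F : Finset (List α), (∀ x ∈ A, x.take n ∈ F) ∧ (F.card : ℝ) ≤ C * L ^ n

/-- The number of prefixes of length `n` of strings in `A` grows subexponentially in `n`. -/
def Subexponential (A : Set (Stream' α)) : Prop := ∀ L : ℝ, 1 < L → GrowthLE A L

/-- The strings obtained from a string in `A` by replacing a tail by a string in `B`. -/
def splice (A B : Set (Stream' α)) : Set (Stream' α) :=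
  {y | ∃ m, ∃ x ∈ A, ∃ z ∈ B, y = x.take m ++ₛ z}

section Growth

variable {A B : Set (Stream' α)} {L L' : ℝ}

lemma GrowthLE.subset (hB : GrowthLE B L) (h : A ⊆ B) : GrowthLE A L := by
  obtain ⟨C, hC, hF⟩ := hB
  refine ⟨C, hC, fun n => ?_⟩
  obtain ⟨F, hcover, hcard⟩ := hF n
  exact ⟨F, fun x hx => hcover x (h hx), hcard⟩

lemma GrowthLE.mono (hA : GrowthLE A L) (h0 : 0 ≤ L) (h : L ≤ L') : GrowthLE A L' := by
  obtain ⟨C, hC, hF⟩ := hA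
  refine ⟨C, hC, fun n => ?_⟩
  obtain ⟨F, hcover, hcard⟩ := hF n
  exact ⟨F, hcover, hcard.trans (by gcongr)⟩

lemma GrowthLE.union (hA : GrowthLE A L) (hB : GrowthLE B L) : GrowthLE (A ∪ B) L := by
  classical
  obtain ⟨C, hC, hF⟩ := hA
  obtain ⟨C', hC', hF'⟩ := hB
  refine ⟨C + C', by positivity, fun n => ?_⟩
  obtain ⟨F, hcover, hcard⟩ := hF n
  obtain ⟨F', hcover', hcard'⟩ := hF' n
  refine ⟨F ∪ F', ?_, ?_⟩
  · rintro x (hx | hx)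
    exacts [Finset.mem_union_left _ (hcover x hx), Finset.mem_union_right _ (hcover' x hx)]
  · calc ((F ∪ F').card : ℝ) ≤ F.card + F'.card := mod_cast Finset.card_union_le F F'
      _ ≤ C * L ^ n + C' * L ^ n := by gcongr
      _ = (C + C') * L ^ n := (add_mul _ _ _).symm

lemma growthLE_singleton (x : Stream' α) (hL : 1 ≤ L) : GrowthLE {x} L :=
  ⟨1, zero_le_one, fun n => ⟨{x.take n}, by simp, by simpa using one_le_pow₀ hL⟩⟩

lemma GrowthLE.image (hA : GrowthLE A L) {g : Stream' α → Stream' β}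
    (hg : ∀ n x y, x.take n = y.take n → (g x).take n = (g y).take n) :
    GrowthLE (g '' A) L := by
  classical
  obtain rfl | ⟨x₀, -⟩ := A.eq_empty_or_nonempty
  · exact ⟨0, le_rfl, fun n => ⟨∅, by simp⟩⟩
  have : Nonempty (Stream' α) := ⟨x₀⟩
  obtain ⟨C, hC, hF⟩ := hA
  refine ⟨C, hC, fun n => ?_⟩
  obtain ⟨F, hcover, hcard⟩ := hF n
  choose! lift hlift using fun (l : List α) (hl : ∃ x ∈ A, x.take n = l) => hl
  refine ⟨F.image fun l => (g (lift l)).take n, ?_,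
    (Nat.cast_le.2 Finset.card_image_le).trans hcard⟩
  rintro _ ⟨x, hx, rfl⟩
  exact Finset.mem_image.2 ⟨x.take n, hcover x hx, hg n _ _ (hlift _ ⟨x, hx, rfl⟩).2⟩

lemma exists_add_one_le_mul_pow {r : ℝ} (hr : 1 < r) :
    ∃ K : ℝ, 0 ≤ K ∧ ∀ n : ℕ, (n + 1 : ℝ) ≤ K * r ^ n := by
  have hd : 0 < r - 1 := sub_pos.2 hr
  refine ⟨1 + 1 / (r - 1), by positivity, fun n => ?_⟩
  have bernoulli : 1 + (n : ℝ) * (r - 1) ≤ r ^ n := by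
    simpa using one_add_mul_le_pow (a := r - 1) (by linarith) n
  have hn : (n : ℝ) ≤ 1 / (r - 1) * r ^ n := by
    rw [div_mul_eq_mul_div, le_div_iff₀ hd]
    linarith
  linarith [one_le_pow₀ hr.le (n := n), add_mul 1 (1 / (r - 1)) (r ^ n)]

lemma take_take_append (x z : Stream' α) (m n : ℕ) :
    (x.take m ++ₛ z).take n = x.take (min m n) ++ z.take (n - m) := by
  obtain h | h := le_total n m
  · rw [Stream'.take_append_of_le_length _ _ _ (by simpa using h), Stream'.take_take]
    simp [Nat.sub_eq_zero_of_le h]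
  · obtain ⟨d, rfl⟩ := Nat.exists_eq_add_of_le h
    simp [Stream'.append_take]

lemma GrowthLE.splice (hA : GrowthLE A L) (hB : GrowthLE B L) (hL : 0 < L) (hLL' : L < L') :
    GrowthLE (splice A B) L' := by
  classical
  obtain ⟨C, hC, hF⟩ := hA
  obtain ⟨C', hC', hF'⟩ := hB
  choose F hcover hcard using hF
  choose F' hcover' hcard' using hF'
  obtain ⟨K, hK, hKn⟩ := exists_add_one_le_mul_pow ((one_lt_div hL).2 hLL')
  refine ⟨C * C' * K, by positivity, fun n => ⟨(Finset.range (n + 1)).biUnion fun m =>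
    Finset.image₂ (· ++ ·) (F m) (F' (n - m)), ?_, ?_⟩⟩
  · rintro _ ⟨m, x, hx, z, hz, rfl⟩
    have hsub : n - m = n - min m n := by omega
    rw [take_take_append, hsub]
    exact Finset.mem_biUnion.2 ⟨min m n, by simp,
      Finset.mem_image₂_of_mem (hcover _ x hx) (hcover' _ z hz)⟩
  · calc (((Finset.range (n + 1)).biUnion fun m =>
        Finset.image₂ (· ++ ·) (F m) (F' (n - m))).card : ℝ)
        ≤ ∑ m ∈ Finset.range (n + 1), ((F m).card * (F' (n - m)).card : ℝ) := mod_cast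
          Finset.card_biUnion_le.trans (Finset.sum_le_sum fun m _ => Finset.card_image₂_le _ _ _)
      _ ≤ ∑ _ ∈ Finset.range (n + 1), C * C' * L ^ n := by
          refine Finset.sum_le_sum fun m hm => ?_
          calc ((F m).card * (F' (n - m)).card : ℝ) ≤ (C * L ^ m) * (C' * L ^ (n - m)) := by
                gcongr
                exacts [hcard m, hcard' _]
            _ = C * C' * (L ^ m * L ^ (n - m)) := by ring
            _ = C * C' * L ^ n := by
                rw [← pow_add, Nat.add_sub_cancel' (Finset.mem_range_succ_iff.1 hm)]
      _ = C * C' * ((n + 1) * L ^ n) := by simp; ring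
      _ ≤ C * C' * (K * (L' / L) ^ n * L ^ n) := by
          gcongr
          exact hKn n
      _ = C * C' * K * L' ^ n := by
          rw [div_pow]
          field_simp

lemma Subexponential.subset (hB : Subexponential B) (h : A ⊆ B) : Subexponential A :=
  fun L hL => (hB L hL).subset h

lemma Subexponential.union (hA : Subexponential A) (hB : Subexponential B) :
    Subexponential (A ∪ B) :=
  fun L hL => (hA L hL).union (hB L hL)

lemma subexponential_singleton (x : Stream' α) : Subexponential {x} :=
  fun _ hL => growthLE_singleton x hL.le

lemma Subexponential.image (hA : Subexponential A) {g : Stream' α → Stream' β}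
    (hg : ∀ n x y, x.take n = y.take n → (g x).take n = (g y).take n) :
    Subexponential (g '' A) :=
  fun L hL => (hA L hL).image hg

lemma Subexponential.splice (hA : Subexponential A) (hB : Subexponential B) :
    Subexponential (splice A B) := fun _ hL =>
  have ⟨_, h1, h2⟩ := exists_between hL
  (hA _ h1).splice (hB _ h1) (one_pos.trans h1) h2

end Growth

section Renewal

variable {A : Set (Stream' α)} {L : ℝ}

lemma exists_lt_one_lt_add_pow {y : ℝ} {a b : ℕ} (h : 1 < y ^ a + y ^ b) (hy : 0 < y) :
    ∃ z, 0 < z ∧ z < y ∧ 1 < z ^ a + z ^ b := by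
  have hcont : ContinuousAt (fun z : ℝ => z ^ a + z ^ b) y := by fun_prop
  have hev : ∀ᶠ z in nhdsWithin y (Iio y), 1 < z ^ a + z ^ b ∧ 0 < z :=
    ((hcont.eventually_const_lt h).and (eventually_gt_nhds hy)).filter_mono nhdsWithin_le_nhds
  obtain ⟨z, ⟨hz, hz0⟩, hzy⟩ := (hev.and self_mem_nhdsWithin).exists
  exact ⟨z, hz0, hzy, hz⟩

/-- Prefixing the words `c false` and `c true` maps the nonempty set `A` into itself, and these
words begin with different letters, so that they generate a free monoid. -/
structure IsFreePair (A : Set (Stream' α)) (c : Bool → List α) : Prop where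
  nonempty : A.Nonempty
  ne_nil : ∀ e, c e ≠ []
  head_ne : (c false).head? ≠ (c true).head?
  append_mem : ∀ e, ∀ x ∈ A, c e ++ₛ x ∈ A

lemma IsFreePair.add_le_card {c : Bool → List α} (hc : IsFreePair A c) {n : ℕ}
    (hn : ∀ e, (c e).length ≤ n) {F : Finset (List α)} (hF : ∀ x ∈ A, x.take n ∈ F) :
    ∃ G : Bool → Finset (List α), (∀ e, ∀ x ∈ A, x.take (n - (c e).length) ∈ G e) ∧
      (G false).card + (G true).card ≤ F.card := by
  classical
  have hinj (e) : Function.Injective (c e ++ ·) := List.append_right_injective _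
  let G (e : Bool) : Finset (List α) := F.preimage (c e ++ ·) (hinj e).injOn
  refine ⟨G, fun e x hx => ?_, ?_⟩
  · have := hF _ (hc.append_mem e x hx)
    rw [← Nat.add_sub_cancel' (hn e), ← Stream'.append_take] at this
    exact Finset.mem_preimage.2 this
  · rw [← Finset.card_image_of_injective (G false) (hinj false),
      ← Finset.card_image_of_injective (G true) (hinj true), ← Finset.card_union_of_disjoint]
    · refine Finset.card_le_card fun l hl => ?_
      obtain h | h := Finset.mem_union.1 hl <;>
      · obtain ⟨l', hl', rfl⟩ := Finset.mem_image.1 h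
        exact Finset.mem_preimage.1 hl'
    · rw [Finset.disjoint_left]
      intro l hl hl'
      obtain ⟨l, -, rfl⟩ := Finset.mem_image.1 hl
      obtain ⟨l', -, heq⟩ := Finset.mem_image.1 hl'
      have hhead := congrArg List.head? heq
      simp only [List.head?_append_of_ne_nil _ (hc.ne_nil _)] at hhead
      exact hc.head_ne hhead.symm

lemma IsFreePair.exists_le_card_mul_pow {c : Bool → List α} (hc : IsFreePair A c) {y : ℝ}
    (hy : 0 < y) (hsum : 1 ≤ y ^ (c false).length + y ^ (c true).length) :
    ∃ δ > 0, ∀ n, ∀ F : Finset (List α), (∀ x ∈ A, x.take n ∈ F) → δ ≤ F.card * y ^ n := by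
  classical
  set N := (c false).length + (c true).length
  have hlen (e) : (c e).length ≤ N := by cases e <;> simp [N]
  refine ⟨min 1 (y ^ N), by positivity, fun n => ?_⟩
  induction n using Nat.strong_induction_on with
  | _ n ih =>
  intro F hF
  obtain hn | hn := lt_or_ge n N
  · have hcard : 1 ≤ (F.card : ℝ) := by
      obtain ⟨x, hx⟩ := hc.nonempty
      exact_mod_cast Finset.card_pos.2 ⟨_, hF x hx⟩
    calc min 1 (y ^ N) ≤ y ^ n := by
          obtain h1 | h1 := le_total 1 y
          · exact (min_le_left _ _).trans (one_le_pow₀ h1)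
          · exact (min_le_right _ _).trans (pow_le_pow_of_le_one hy.le h1 hn.le)
      _ ≤ F.card * y ^ n := le_mul_of_one_le_left (by positivity) hcard
  · obtain ⟨G, hG, hcard⟩ := hc.add_le_card (fun e => (hlen e).trans hn) hF
    set δ := min 1 (y ^ N)
    have hδ (e) : δ * y ^ (c e).length ≤ (G e).card * y ^ n := by
      have hpos := List.length_pos_iff.2 (hc.ne_nil e)
      calc δ * y ^ (c e).length
          ≤ (G e).card * y ^ (n - (c e).length) * y ^ (c e).length := by
            gcongr
            exact ih _ (by have := hlen e; omega) _ (hG e)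
        _ = (G e).card * y ^ n := by
            rw [mul_assoc, ← pow_add, Nat.sub_add_cancel ((hlen e).trans hn)]
    calc δ ≤ δ * (y ^ (c false).length + y ^ (c true).length) :=
          le_mul_of_one_le_right (by positivity) hsum
      _ ≤ ((G false).card + (G true).card) * y ^ n := by linarith [hδ false, hδ true]
      _ ≤ F.card * y ^ n := by gcongr; exact_mod_cast hcard

theorem IsFreePair.add_pow_le_one {c : Bool → List α} (hc : IsFreePair A c) (hL : 0 < L)
    (hA : GrowthLE A L) : (1 / L) ^ (c false).length + (1 / L) ^ (c true).length ≤ 1 := by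
  by_contra! hlt
  obtain ⟨y, hy, hyL, hsum⟩ := exists_lt_one_lt_add_pow hlt (by positivity)
  obtain ⟨δ, hδ, hcount⟩ := hc.exists_le_card_mul_pow hy hsum.le
  obtain ⟨C, _, hF⟩ := hA
  have hbound (n : ℕ) : δ ≤ C * (L * y) ^ n := by
    obtain ⟨F, hcover, hcard⟩ := hF n
    calc δ ≤ F.card * y ^ n := hcount n F hcover
      _ ≤ C * L ^ n * y ^ n := by gcongr
      _ = C * (L * y) ^ n := by ring
  have htendsto : Tendsto (fun n => C * (L * y) ^ n) atTop (nhds (C * 0)) :=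
    (tendsto_pow_atTop_nhds_zero_of_lt_one (by positivity)
      (by rwa [mul_comm, ← lt_div_iff₀ hL])).const_mul C
  exact hδ.not_ge (mul_zero C ▸ ge_of_tendsto' htendsto hbound)

end Renewal

section Entropy

variable {k : ℕ} {u v : ℕ → ℕ} {L : ℝ}

lemma ofFn_get_eq_take (x : Stream' α) (n : ℕ) :
    List.ofFn (fun i : Fin n => x.get i) = x.take n :=
  List.ext_getElem (by simp) (by simp)

lemma nWords_eq_ncard (k : ℕ) (u v : ℕ → ℕ) (n : ℕ) :
    nWords k u v n = ((Stream'.take n) '' SigSet k u v).ncard := by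
  have himage : (Stream'.take n) '' SigSet k u v =
      List.ofFn '' {w : Fin n → ℕ | ∃ x ∈ SigSet k u v, ∀ i : Fin n, x i = w i} := by
    ext l
    constructor
    · rintro ⟨x, hx, rfl⟩
      exact ⟨fun i => x i, ⟨x, hx, fun _ => rfl⟩, ofFn_get_eq_take x n⟩
    · rintro ⟨w, ⟨x, hx, hw⟩, rfl⟩
      exact ⟨x, hx, (ofFn_get_eq_take x n).symm.trans (congrArg List.ofFn (funext hw))⟩
  rw [himage, Set.ncard_image_of_injective _ List.ofFn_injective]
  exact Nat.card_coe_set_eq _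

lemma finite_take_image_SigSet (k : ℕ) (u v : ℕ → ℕ) (n : ℕ) :
    ((Stream'.take n) '' SigSet k u v).Finite := by
  refine ((List.finite_length_eq (Fin k) n).image (List.map Fin.val)).subset ?_
  rintro _ ⟨x, hx, rfl⟩
  let y : Stream' (Fin k) := fun i => ⟨x i, hx.1 i⟩
  exact ⟨y.take n, Stream'.length_take _ _, Stream'.map_take n y Fin.val⟩

lemma nWords_le_pow (k : ℕ) (u v : ℕ → ℕ) (n : ℕ) : nWords k u v n ≤ k ^ n := by
  have hinj : Function.Injective
      fun (w : {w : Fin n → ℕ // ∃ x ∈ SigSet k u v, ∀ i : Fin n, x i = w i}) (i : Fin n) =>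
        (⟨w.1 i, let ⟨_, hx, hw⟩ := w.2; (hw i).ge.trans_lt (hx.1 i)⟩ : Fin k) := by
    intro w w' h
    ext i
    exact congrArg Fin.val (congrFun h i)
  simpa [nWords] using Nat.card_le_card_of_injective _ hinj

lemma growthLE_SigSet_iff (hL : 0 < L) : GrowthLE (SigSet k u v) L ↔
    (fun n => (nWords k u v n : ℝ)) =O[atTop] fun n => L ^ n := by
  rw [Asymptotics.isBigO_nat_atTop_iff fun n h => absurd h (pow_pos hL n).ne']
  simp only [nWords_eq_ncard, Real.norm_natCast, Real.norm_of_nonneg (pow_pos hL _).le]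
  constructor
  · rintro ⟨C, -, hF⟩
    refine ⟨C, fun n => ?_⟩
    obtain ⟨F, hcover, hcard⟩ := hF n
    refine le_trans (Nat.cast_le.2 ?_) hcard
    rw [← Set.ncard_coe_finset]
    refine Set.ncard_le_ncard ?_ F.finite_toSet
    rintro _ ⟨x, hx, rfl⟩
    exact hcover x hx
  · rintro ⟨C, hC⟩
    have hfin := finite_take_image_SigSet k u v
    refine ⟨C, ?_, fun n => ⟨(hfin n).toFinset, fun x hx => ?_, ?_⟩⟩
    · simpa using (Nat.cast_nonneg _).trans (hC 0)
    · exact (hfin n).mem_toFinset.2 ⟨x, hx, rfl⟩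
    · rw [← Set.ncard_eq_toFinset_card _ (hfin n)]
      exact hC n

lemma logb_nWords_div_nonneg (n : ℕ) : 0 ≤ Real.logb 2 (nWords k u v n) / (n : ℝ) := by
  obtain h | h := Nat.eq_zero_or_pos (nWords k u v n)
  · simp [h]
  · exact div_nonneg (Real.logb_nonneg one_lt_two (by exact_mod_cast h)) (Nat.cast_nonneg n)

lemma logb_nWords_div_le_logb (n : ℕ) :
    Real.logb 2 (nWords k u v n) / (n : ℝ) ≤ max (Real.logb 2 k) 0 := by
  obtain rfl | hn := Nat.eq_zero_or_pos n
  · simp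
  obtain h | h := Nat.eq_zero_or_pos (nWords k u v n)
  · simp [h]
  refine le_trans ?_ (le_max_left _ _)
  rw [div_le_iff₀ (by positivity), mul_comm, ← Real.logb_pow]
  exact Real.logb_le_logb_of_le one_lt_two (by positivity) (mod_cast nWords_le_pow k u v n)

lemma entS_nonneg (k : ℕ) (u v : ℕ → ℕ) : 0 ≤ entS k u v :=
  le_limsup_of_frequently_le (Frequently.of_forall logb_nWords_div_nonneg)
    (isBoundedUnder_of ⟨_, logb_nWords_div_le_logb⟩)

lemma entS_le_logb (hL : 1 ≤ L) (h : GrowthLE (SigSet k u v) L) :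
    entS k u v ≤ Real.logb 2 L := by
  have hL0 : 0 < L := one_pos.trans_le hL
  obtain ⟨C, hC, hw⟩ := ((growthLE_SigSet_iff hL0).1 h).exists_pos
  have hlim : Tendsto (fun n : ℕ => Real.logb 2 (max C 1) / (n : ℝ) + Real.logb 2 L) atTop
      (nhds (Real.logb 2 L)) := by
    simpa using (tendsto_const_div_atTop_nhds_zero_nat (Real.logb 2 (max C 1))).add_const _
  rw [entS, ← hlim.limsup_eq]
  refine limsup_le_limsup ?_ (isBoundedUnder_of ⟨0, logb_nWords_div_nonneg⟩).isCoboundedUnder_le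
    hlim.isBoundedUnder_le
  filter_upwards [eventually_gt_atTop 0, hw.bound] with n hn hbound
  rw [Real.norm_natCast, Real.norm_of_nonneg (pow_pos hL0 n).le] at hbound
  have hpow : 1 ≤ max C 1 * L ^ n :=
    one_le_mul_of_one_le_of_one_le (le_max_right _ _) (one_le_pow₀ hL)
  have hlog : Real.logb 2 (nWords k u v n) ≤ Real.logb 2 (max C 1 * L ^ n) := by
    obtain h0 | h0 := Nat.eq_zero_or_pos (nWords k u v n)
    · simpa [h0] using Real.logb_nonneg one_lt_two hpow
    · refine Real.logb_le_logb_of_le one_lt_two (by positivity) (hbound.trans ?_)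
      gcongr
      exact le_max_left _ _
  rw [div_add' _ _ _ (by positivity), mul_comm (Real.logb 2 L), ← Real.logb_pow,
    ← Real.logb_mul (by positivity) (by positivity)]
  gcongr

lemma growthLE_of_entS_lt (hL : 0 < L) (h : entS k u v < Real.logb 2 L) :
    GrowthLE (SigSet k u v) L := by
  rw [growthLE_SigSet_iff hL]
  refine Asymptotics.IsBigO.of_bound 1 ?_
  filter_upwards [eventually_gt_atTop 0,
    eventually_lt_of_limsup_lt h (isBoundedUnder_of ⟨_, logb_nWords_div_le_logb⟩)] with n hn hlt
  rw [div_lt_iff₀ (by positivity), mul_comm, ← Real.logb_pow] at hlt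
  rw [Real.norm_natCast, Real.norm_of_nonneg (pow_pos hL n).le, one_mul]
  obtain h0 | h0 := Nat.eq_zero_or_pos (nWords k u v n)
  · simpa [h0] using (pow_pos hL n).le
  · exact ((Real.logb_lt_logb_iff one_lt_two (by positivity) (by positivity)).1 hlt).le

end Entropy

/-- The strings all of whose tails lie between `U false` and `U true`. -/
def boundedShift [LinearOrder α] (U : Bool → Stream' α) : Set (Stream' α) :=
  {x | ∀ e n, SideLE e (U e) (x.drop n)}

section BoundedShift

variable [LinearOrder α] {U V : Bool → Stream' α} {x y z : Stream' α} {e : Bool}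

lemma sideLE_of_mem_boundedShift (hx : x ∈ boundedShift U) (e : Bool) : SideLE e (U e) x :=
  hx e 0

lemma drop_mem_boundedShift (hx : x ∈ boundedShift U) (m : ℕ) : x.drop m ∈ boundedShift U :=
  fun e n => by simpa only [Stream'.drop_drop] using hx e (m + n)

lemma boundedShift_subset (h : ∀ e, SideLE e (V e) (U e)) : boundedShift U ⊆ boundedShift V :=
  fun _ hx e n => (h e).trans (hx e n)

lemma SideLE.eq_append_or_forall {t : List α} (h : SideLE e y (t ++ₛ z)) :
    (∃ y', y = t ++ₛ y') ∨ ∀ z', SideLE e y (t ++ₛ z') := by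
  induction t generalizing y with
  | nil => exact .inl ⟨y, rfl⟩
  | cons c t ih =>
    simp only [Stream'.cons_append_stream] at h ⊢
    rw [← y.eta, sideLE_cons] at h
    obtain hlt | ⟨rfl, h⟩ := h
    · exact .inr fun z' => (SideLT.of_head hlt).le
    · obtain ⟨y', hy'⟩ | hall := ih h
      · exact .inl ⟨y', by rw [← hy', y.eta]⟩
      · refine .inr fun z' => ?_
        rw [← y.eta, sideLE_cons]
        exact .inr ⟨rfl, hall z'⟩

lemma exists_append_mem_of_notMem (hU : ∀ e, U e ∈ boundedShift U) (hx : x ∉ boundedShift U) :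
    ∃ m e, x.take m ++ₛ U e ∈ boundedShift U ∧ SideLE e (x.drop m) (U e) := by
  classical
  have hex : ∃ m e, ¬ SideLE e (U e) (x.drop m) := by
    by_contra! hall
    exact hx fun e n => hall n e
  obtain ⟨e, hexit⟩ := Nat.find_spec hex
  have hbefore {n} (hn : n < Nat.find hex) (e') : SideLE e' (U e') (x.drop n) := by
    by_contra h
    exact Nat.find_min hex hn ⟨e', h⟩
  generalize Nat.find hex = m at hexit hbefore
  replace hexit := (not_sideLE.1 hexit).le
  refine ⟨m, e, fun e' n => ?_, hexit⟩
  obtain ⟨d, rfl⟩ | hnm : (∃ d, n = m + d) ∨ n < m :=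
    (le_or_gt m n).imp_left Nat.exists_eq_add_of_le
  · have := drop_length_append (x.take m) d (U e)
    rw [Stream'.length_take] at this
    exact this ▸ hU e e' d
  · obtain ⟨d, rfl⟩ := Nat.exists_eq_add_of_le hnm.le
    have hdrop : (x.take (n + d) ++ₛ U e).drop n = (x.drop n).take d ++ₛ U e := by
      rw [Stream'.take_add, Stream'.append_append_stream]
      simpa using drop_length_append (x.take n) 0 ((x.drop n).take d ++ₛ U e)
    have hsplit : x.drop n = (x.drop n).take d ++ₛ x.drop (n + d) := by
      rw [← Stream'.drop_drop, Stream'.append_take_drop]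
    have hprefix := hbefore hnm e'
    rw [hsplit] at hprefix
    rw [hdrop]
    obtain rfl | rfl := Bool.eq_or_eq_not e' e
    · exact hprefix.trans ((sideLE_append_iff _).2 hexit)
    · obtain ⟨y, hy⟩ | hall := hprefix.eq_append_or_forall
      · have := hU (!e) e d
        rw [hy] at this ⊢
        rw [sideLE_append_iff, sideLE_not]
        have hy' := Stream'.drop_append_stream ((x.drop n).take d) y
        rw [Stream'.length_take] at hy'
        rwa [hy'] at this
      · exact hall _

lemma subset_union_splice (hU : ∀ e, U e ∈ boundedShift U) (A : Set (Stream' α))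
    (hA : ∀ x ∈ A, ∀ m, x.drop m ∈ A) :
    A ⊆ boundedShift U ∪ splice (boundedShift U) (⋃ e, {z ∈ A | SideLE e z (U e)}) := by
  refine fun x hx => or_iff_not_imp_left.2 fun hxU => ?_
  obtain ⟨m, e, hmem, hexit⟩ := exists_append_mem_of_notMem hU hxU
  refine ⟨m, _, hmem, x.drop m, mem_iUnion.2 ⟨e, hA x hx m, hexit⟩, ?_⟩
  rw [Stream'.take_append_of_le_length _ _ _ (by simp), List.take_of_length_le (by simp),
    Stream'.append_take_drop]

end BoundedShift

section Modification

/-- `U e` is the periodic string with period word `w e ++ [a e]`, and `V e` is obtained from it by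
moving the last letter of the first period one step outwards, from `a e` to `b e`, and then
continuing with `U (!e)`. -/
structure IsModification [LinearOrder α] (w : Bool → List α) (a b : Bool → α)
    (U V : Bool → Stream' α) : Prop where
  eq_append : ∀ e, U e = w e ++ₛ a e :: U e
  modified_eq : ∀ e, V e = w e ++ₛ b e :: U (!e)
  sideLT : ∀ e, SideLT e (b e) (a e)
  adjacent : ∀ e t, SideLT e (b e) t → ¬ SideLT e t (a e)

lemma eq_append_of_sandwich [LinearOrder α] {e : Bool} {a b : α} {x y z : Stream' α} {w : List α}
    (hab : ∀ t, SideLT e b t → ¬ SideLT e t a)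
    (hyz : SideLE e (w ++ₛ b :: y) z) (hzx : SideLE e z (w ++ₛ a :: x)) :
    ∃ z', z = w ++ₛ a :: z' ∧ SideLE e z' x ∨ z = w ++ₛ b :: z' ∧ SideLE e y z' := by
  induction w generalizing z with
  | nil =>
    refine ⟨z.tail, ?_⟩
    rw [Stream'.nil_append_stream, ← z.eta, sideLE_cons] at hyz hzx
    simp only [Stream'.nil_append_stream]
    obtain hbz | ⟨rfl, hyz⟩ := hyz
    · obtain ⟨rfl, hle⟩ := hzx.resolve_left (hab _ hbz)
      exact .inl ⟨z.eta.symm, hle⟩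
    · exact .inr ⟨z.eta.symm, hyz⟩
  | cons c w ih =>
    rw [Stream'.cons_append_stream, ← z.eta, sideLE_cons] at hyz hzx
    simp only [Stream'.cons_append_stream]
    obtain hcz | ⟨rfl, hyz⟩ := hyz
    · obtain hzc | ⟨rfl, -⟩ := hzx
      · exact absurd hzc.le (not_sideLE.2 hcz)
      · exact absurd (sideLE_refl e _) (not_sideLE.2 hcz)
    · obtain hzc | ⟨-, hzx⟩ := hzx
      · exact absurd (sideLE_refl e _) (not_sideLE.2 hzc)
      · obtain ⟨z', hz'⟩ := ih hyz hzx
        refine ⟨z', hz'.imp (And.imp_left ?_) (And.imp_left ?_)⟩ <;>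
        · intro htail
          rw [← htail, z.eta]

variable {L L' : ℝ} {E : Bool → Set (Stream' α)} {w : Bool → List α} {a b : Bool → α}

lemma exists_cover_of_alternating {n : ℕ} {F : Bool → Finset (List α)}
    (hE : ∀ e, ∀ z ∈ E e, (∃ z' ∈ E e, z = w e ++ₛ a e :: z') ∨
      ∃ z' ∈ E (!e), z = w e ++ₛ b e :: z')
    (hF : ∀ e, ∀ z ∈ E e, z.take n ∈ F e) (e : Bool) :
    ∃ G : Finset (List α), (∀ z ∈ E e, z.take ((w e).length + 1 + n) ∈ G) ∧
      G.card ≤ (F false).card + (F true).card := by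
  classical
  let stay (l : List α) : List α := w e ++ a e :: l
  let switch (l : List α) : List α := w e ++ b e :: l
  have htake (c : α) (z') :
      (w e ++ₛ c :: z').take ((w e).length + 1 + n) = w e ++ c :: z'.take n := by
    rw [add_assoc, ← Stream'.append_take, add_comm 1 n, Stream'.take_succ_cons]
  refine ⟨(F e).image stay ∪ (F (!e)).image switch, fun z hz => ?_, ?_⟩
  · rw [Finset.mem_union, Finset.mem_image, Finset.mem_image]
    obtain ⟨z', hz', rfl⟩ | ⟨z', hz', rfl⟩ := hE e z hz
    · exact .inl ⟨_, hF e z' hz', (htake _ _).symm⟩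
    · exact .inr ⟨_, hF (!e) z' hz', (htake _ _).symm⟩
  · refine (Finset.card_union_le _ _).trans ((add_le_add Finset.card_image_le
      Finset.card_image_le).trans_eq ?_)
    cases e
    exacts [rfl, add_comm _ _]

/-- The weights `L ^ -(length of the period)` turn the two-state recursion for the number of
prefixes into the inequality `hw`. -/
lemma exists_card_mul_pow_le
    (hE : ∀ e, ∀ z ∈ E e, (∃ z' ∈ E e, z = w e ++ₛ a e :: z') ∨
      ∃ z' ∈ E (!e), z = w e ++ₛ b e :: z')
    (hL : 1 ≤ L)
    (hw : (1 / L) ^ ((w false).length + 1) + (1 / L) ^ ((w true).length + 1) ≤ 1) (n : ℕ) :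
    ∀ e, ∃ F : Finset (List α), (∀ z ∈ E e, z.take n ∈ F) ∧ F.card * L ^ ((w e).length + 1) ≤
      (L ^ ((w false).length + 1) + L ^ ((w true).length + 1)) * L ^ n := by
  have hL0 : 0 < L := one_pos.trans_le hL
  set C := L ^ ((w false).length + 1) + L ^ ((w true).length + 1)
  induction n using Nat.strong_induction_on with
  | _ n ih =>
  intro e
  obtain hn | hn := lt_or_ge n ((w e).length + 1)
  · refine ⟨{(w e).take n}, fun z hz => Finset.mem_singleton.2 ?_, ?_⟩
    · obtain ⟨z', -, rfl⟩ | ⟨z', -, rfl⟩ := hE e z hz <;>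
        exact Stream'.take_append_of_le_length _ _ _ (Nat.le_of_lt_succ hn)
    · have hC : L ^ ((w e).length + 1) ≤ C := by cases e <;> simp [C, hL0.le]
      simpa using hC.trans (le_mul_of_one_le_right (by positivity) (one_le_pow₀ hL))
  · obtain ⟨n, rfl⟩ := Nat.exists_eq_add_of_le hn
    choose F hcover hcard using ih n (by omega)
    obtain ⟨G, hG, hGcard⟩ := exists_cover_of_alternating hE hcover e
    refine ⟨G, hG, ?_⟩
    have hbound (e') : ((F e').card : ℝ) ≤ C * L ^ n * (1 / L) ^ ((w e').length + 1) := by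
      rw [one_div_pow, mul_one_div, le_div_iff₀ (by positivity)]
      exact hcard e'
    calc _ ≤ ((F false).card + (F true).card : ℝ) * L ^ ((w e).length + 1) := by
          gcongr
          exact_mod_cast hGcard
      _ ≤ C * L ^ n * 1 * L ^ ((w e).length + 1) := by
          gcongr
          refine le_trans ?_ (mul_le_mul_of_nonneg_left hw (by positivity))
          linarith [hbound false, hbound true]
      _ = C * L ^ ((w e).length + 1 + n) := by ring

lemma growthLE_of_alternating
    (hE : ∀ e, ∀ z ∈ E e, (∃ z' ∈ E e, z = w e ++ₛ a e :: z') ∨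
      ∃ z' ∈ E (!e), z = w e ++ₛ b e :: z')
    (hL : 1 ≤ L)
    (hw : (1 / L) ^ ((w false).length + 1) + (1 / L) ^ ((w true).length + 1) ≤ 1) (e : Bool) :
    GrowthLE (E e) L := by
  have : 0 < L := one_pos.trans_le hL
  refine ⟨(L ^ ((w false).length + 1) + L ^ ((w true).length + 1)) / L ^ ((w e).length + 1),
    by positivity, fun n => ?_⟩
  obtain ⟨F, hcover, hcard⟩ := exists_card_mul_pow_le hE hL hw n e
  exact ⟨F, hcover, by rwa [div_mul_eq_mul_div, le_div_iff₀ (by positivity)]⟩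

variable [LinearOrder α] {U V : Bool → Stream' α}

lemma IsModification.boundedShift_subset (h : IsModification w a b U V) :
    boundedShift U ⊆ boundedShift V := by
  refine LexShift.boundedShift_subset fun e => ?_
  rw [h.modified_eq, h.eq_append e, sideLE_append_iff, sideLE_cons]
  exact .inl (h.sideLT e)

theorem IsModification.growthLE (h : IsModification w a b U V) (hU : ∀ e, U e ∈ boundedShift U)
    (hL : 1 ≤ L) (hLL' : L < L') (hG : GrowthLE (boundedShift U) L)
    (hw : (1 / L) ^ ((w false).length + 1) + (1 / L) ^ ((w true).length + 1) ≤ 1) :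
    GrowthLE (boundedShift V) L' := by
  let E (e : Bool) : Set (Stream' α) := {z ∈ boundedShift V | SideLE e z (U e)}
  have hE (e) (z) (hz : z ∈ E e) : (∃ z' ∈ E e, z = w e ++ₛ a e :: z') ∨
      ∃ z' ∈ E (!e), z = w e ++ₛ b e :: z' := by
    have htail {c z'} (hz' : z = w e ++ₛ c :: z') : z' ∈ boundedShift V := by
      have := drop_mem_boundedShift hz.1 ((w e).length + 1)
      rwa [hz', drop_length_append] at this
    obtain ⟨z', ⟨hz', hle⟩ | ⟨hz', hle⟩⟩ := eq_append_of_sandwich (h.adjacent e)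
      (h.modified_eq e ▸ sideLE_of_mem_boundedShift hz.1 e) (h.eq_append e ▸ hz.2)
    · exact .inl ⟨z', ⟨htail hz', hle⟩, hz'⟩
    · exact .inr ⟨z', ⟨htail hz', sideLE_not.2 hle⟩, hz'⟩
  have hEgrowth := growthLE_of_alternating hE hL hw
  have hiUnion : ⋃ e, E e = E true ∪ E false := iSup_bool_eq
  have hexit : GrowthLE (⋃ e, E e) L := hiUnion ▸ (hEgrowth true).union (hEgrowth false)
  have hL0 : 0 < L := one_pos.trans_le hL
  exact ((hG.mono hL0.le hLL'.le).union (hG.splice hexit hL0 hLL')).subset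
    (subset_union_splice hU _ fun x hx => drop_mem_boundedShift hx)

end Modification

/-- The strings `U e` are periodic with period words `W e`, and they bound their own tails. -/
structure IsPeriodicPair [LinearOrder α] (W : Bool → List α) (U : Bool → Stream' α) : Prop where
  ne_nil : ∀ e, W e ≠ []
  eq_append : ∀ e, U e = W e ++ₛ U e
  mem : ∀ e, U e ∈ boundedShift U

lemma IsModification.isPeriodicPair [LinearOrder α] {w : Bool → List α} {a b : Bool → α}
    {U V : Bool → Stream' α} (h : IsModification w a b U V) (hU : ∀ e, U e ∈ boundedShift U) :
    IsPeriodicPair (fun e => w e ++ [a e]) U where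
  ne_nil e := by simp
  eq_append e := by
    rw [Stream'.append_append_stream]
    exact h.eq_append e
  mem := hU

namespace IsPeriodicPair

variable [LinearOrder α] {W : Bool → List α} {U : Bool → Stream' α} {e : Bool} {x : Stream' α}

lemma exists_cons (hU : IsPeriodicPair W U) (e : Bool) :
    ∃ t : List α, W e = ((U e).head :: t : List α) := by
  obtain ⟨a, t, ht⟩ := List.exists_cons_of_ne_nil (hU.ne_nil e)
  refine ⟨t, ?_⟩
  rw [hU.eq_append, ht]
  rfl

lemma drop_length (hU : IsPeriodicPair W U) (e : Bool) :
    (U e).drop (W e).length = U e := by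
  conv_lhs => rw [hU.eq_append e, Stream'.drop_append_stream]

lemma take_length (hU : IsPeriodicPair W U) (e : Bool) :
    (U e).take (W e).length = W e := by
  conv_lhs => rw [hU.eq_append e]
  rw [Stream'.take_append_of_le_length _ _ _ le_rfl, List.take_length]

lemma exists_eq_append {w : List α} (hU : IsPeriodicPair W U)
    (hx : U e = w ++ₛ x) (hw : w.length ≤ (W e).length) : ∃ s, W e = w ++ s := by
  obtain ⟨d, hd⟩ := Nat.exists_eq_add_of_le hw
  refine ⟨x.take d, ?_⟩
  rw [← hU.take_length, hd, hx, Stream'.append_take]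

end IsPeriodicPair

section BinaryOrder

variable {e : Bool} {x y : Stream' Bool}

lemma sideLE_cons_self (e : Bool) (x : Stream' Bool) : SideLE e (e :: x) x := by
  refine (em (e :: x = x)).elim (fun h => h.symm ▸ sideLE_refl e _) fun h => SideLT.le ?_
  obtain ⟨m, htake, hne⟩ := exists_take_eq_get_ne h
  have hconst : ∀ i ≤ m, (e :: x).get i = e := by
    intro i
    induction i with
    | zero => exact fun _ => rfl
    | succ i ih => exact fun hi => (take_eq_take_iff.1 htake i hi).symm.trans (ih (by lia))
  refine sideLT_iff_exists_take.2 ⟨m, htake, sideLT_bool.2 ⟨hconst m le_rfl, ?_⟩⟩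
  rw [hconst m le_rfl] at hne
  exact Bool.eq_not.2 hne.symm

lemma sideLE_drop_of_forall_get_eq {n : ℕ} (h : ∀ i < n, x.get i = e) :
    SideLE e x (x.drop n) := by
  induction n with
  | zero => exact sideLE_refl e x
  | succ n ih =>
    refine (ih fun i hi => h i (by lia)).trans ?_
    have hcons : x.drop n = e :: x.drop (n + 1) := by
      rw [← (x.drop n).eta, Stream'.head_drop, h n (by lia), Stream'.tail_drop']
    rw [hcons]
    exact sideLE_cons_self e _

lemma sideLE_of_head (hx : x.head = e) (hy : y.head = !e) : SideLE e x y :=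
  (SideLT.of_head (sideLT_bool.2 ⟨hx, hy⟩)).le

lemma sideLE_const (e : Bool) (x : Stream' Bool) : SideLE e (Stream'.const e) x := by
  refine not_sideLT.1 fun h => ?_
  obtain ⟨m, -, hlt⟩ := sideLT_iff_exists_take.1 h
  exact Bool.not_ne_self e (sideLT_bool.1 hlt).2.symm

end BinaryOrder

section Expand

variable {f : Bool → Bool} {e : Bool} {x y z : Stream' Bool} {U V : Bool → Stream' Bool}

/-- The substitution on binary words that inserts `!b` behind every letter `b` satisfying `f`. -/
def block (f : Bool → Bool) (b : Bool) : List Bool := b :: if f b then [!b] else []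

/-- The substitution `block f` on binary strings. In the state of the corecursion, the flag says
that the first letter of its block has already been written. -/
def expand (f : Bool → Bool) (z : Stream' Bool) : Stream' Bool :=
  Stream'.corec (fun s : Bool × Stream' Bool => s.1 ^^ s.2.head)
    (fun s => if !s.1 && f s.2.head then (true, s.2) else (false, s.2.tail)) (false, z)

lemma expand_cons (f : Bool → Bool) (b : Bool) (z : Stream' Bool) :
    expand f (b :: z) = block f b ++ₛ expand f z := by
  rw [expand, Stream'.corec_eq]
  by_cases hb : f b
  · simp only [Bool.false_bne, Stream'.head_cons, Bool.not_false, hb, Bool.and_self, if_true]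
    rw [Stream'.corec_eq]
    simp [block, expand, hb, Stream'.cons_append_stream]
  · simp [block, expand, hb, Stream'.cons_append_stream]

lemma expand_append (w : List Bool) (z : Stream' Bool) :
    expand f (w ++ₛ z) = w.flatMap (block f) ++ₛ expand f z := by
  induction w with
  | nil => rfl
  | cons b w ih =>
    rw [Stream'.cons_append_stream, expand_cons, ih, List.flatMap_cons,
      Stream'.append_append_stream]

lemma head_expand : (expand f z).head = z.head := by
  rw [← z.eta, expand_cons]
  rfl

lemma expand_take_eq {n : ℕ} (h : x.take n = y.take n) :
    (expand f x).take n = (expand f y).take n := by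
  have hlen : n ≤ ((y.take n).flatMap (block f)).length := by
    rw [List.length_flatMap]
    calc n = (((y.take n).map fun _ => 1).sum) := by simp
      _ ≤ _ := List.sum_le_sum fun b _ => by simp [block]
  rw [eq_append_drop_of_take_eq h, ← y.append_take_drop n, expand_append, expand_append,
    Stream'.take_append_of_le_length _ _ _ hlen, Stream'.append_take_drop,
    Stream'.take_append_of_le_length _ _ _ hlen]

lemma sideLT_expand (h : SideLT e x y) : SideLT e (expand f x) (expand f y) := by
  obtain ⟨m, htake, hlt⟩ := sideLT_iff_exists_take.1 h
  have hdrop : SideLT e (expand f (x.drop m)) (expand f (y.drop m)) :=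
    SideLT.of_head (by rwa [head_expand, head_expand, Stream'.head_drop, Stream'.head_drop])
  rwa [← not_sideLE, ← sideLE_append_iff ((y.take m).flatMap (block f)), ← expand_append,
    ← expand_append, Stream'.append_take_drop, ← eq_append_drop_of_take_eq htake,
    not_sideLE] at hdrop

lemma sideLE_expand_iff : SideLE e (expand f x) (expand f y) ↔ SideLE e x y := by
  refine ⟨fun h => not_sideLT.1 fun hlt => not_sideLT.2 h (sideLT_expand hlt), fun h => ?_⟩
  obtain rfl | hlt := sideLE_iff_eq_or_sideLT.1 h
  exacts [sideLE_refl e _, (sideLT_expand hlt).le]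

lemma expand_injective (f : Bool → Bool) : Function.Injective (expand f) := fun _ _ h =>
  SideLE.antisymm (e := false) (sideLE_expand_iff.1 (le_of_eq h))
    (sideLE_expand_iff.1 (le_of_eq h.symm))

lemma append_eq_expand {w : List Bool} (h : w ++ₛ x = expand f z) :
    (∃ v y, z = v ++ₛ y ∧ w = v.flatMap (block f) ∧ x = expand f y) ∨
      ∃ v b y, z = v ++ₛ b :: y ∧ f b ∧ w = v.flatMap (block f) ++ [b] ∧
        x = (!b) :: expand f y := by
  induction w using List.reverseRecOn generalizing x with
  | nil => exact .inl ⟨[], z, rfl, rfl, h⟩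
  | append_singleton w c ih =>
    rw [Stream'.append_append_stream] at h
    obtain ⟨v, y, rfl, rfl, hx⟩ | ⟨v, b, y, rfl, hb, rfl, hx⟩ := ih h
    · rw [← y.eta, expand_cons, block] at hx
      simp only [Stream'.cons_append_stream, Stream'.nil_append_stream] at hx
      obtain ⟨rfl, rfl⟩ := Stream'.cons_injective2 hx
      by_cases hf : f y.head
      · refine .inr ⟨v, y.head, y.tail, by rw [y.eta], hf, rfl, ?_⟩
        simp [hf, Stream'.cons_append_stream]
      · refine .inl ⟨v ++ [y.head], y.tail, ?_, by simp [block, hf], by simp [hf]⟩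
        rw [Stream'.append_append_stream, Stream'.append_stream_head_tail]
    · obtain ⟨rfl, rfl⟩ := Stream'.cons_injective2 hx
      refine .inl ⟨v ++ [b], y, ?_, by simp [block, hb], rfl⟩
      rw [Stream'.append_append_stream]
      rfl

lemma drop_expand (n : ℕ) (f : Bool → Bool) (z : Stream' Bool) :
    (∃ m, (expand f z).drop n = expand f (z.drop m)) ∨
      ∃ m, f (z.get m) ∧ (expand f z).drop n = (!z.get m) :: expand f (z.drop (m + 1)) := by
  obtain ⟨v, y, rfl, -, h⟩ | ⟨v, b, y, rfl, hb, -, h⟩ :=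
    append_eq_expand ((expand f z).append_take_drop n)
  · exact .inl ⟨v.length, by rw [Stream'.drop_append_stream, h]⟩
  · refine .inr ⟨v.length, ?_⟩
    have hy := drop_length_append v 1 (b :: y)
    have hb' : (v ++ₛ b :: y).get v.length = b := by
      rw [← Stream'.head_drop, Stream'.drop_append_stream]
      rfl
    rw [hy, hb', h]
    exact ⟨hb, rfl⟩

/-- Desubstitution: reading off the blocks one after the other never fails on `Q`. -/
lemma mem_range_expand {Q : Set (Stream' Bool)}
    (hQ : ∀ z ∈ Q, if f z.head then z.tail.head = !z.head ∧ z.tail.tail ∈ Q else z.tail ∈ Q)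
    (hz : z ∈ Q) : z ∈ range (expand f) := by
  let next (z : Stream' Bool) : Stream' Bool := if f z.head then z.tail.tail else z.tail
  let contract (z : Stream' Bool) : Stream' Bool := Stream'.corec Stream'.head next z
  have hcontract (z) : contract z = z.head :: contract (next z) := Stream'.corec_eq _ _ z
  have hstep {z} (hz : z ∈ Q) : next z ∈ Q ∧ z = block f z.head ++ₛ next z := by
    have h := hQ z hz
    by_cases hf : f z.head
    · simp only [hf, if_true] at h
      refine ⟨by simpa only [next, hf, if_true] using h.2, ?_⟩
      simp only [next, block, hf, if_true, ← h.1, Stream'.cons_append_stream,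
        Stream'.nil_append_stream, Stream'.eta]
    · simp only [hf, if_false, Bool.false_eq_true] at h
      simp [next, hf, h, block, Stream'.cons_append_stream]
  have htake (n : ℕ) : ∀ z ∈ Q, (expand f (contract z)).take n = z.take n := by
    induction n using Nat.strong_induction_on with
    | _ n ih =>
      intro z hz
      obtain ⟨hnext, heq⟩ := hstep hz
      rw [hcontract, expand_cons]
      conv_rhs => rw [heq]
      obtain hn | hn := lt_or_ge n (block f z.head).length
      · rw [Stream'.take_append_of_le_length _ _ _ hn.le,
          Stream'.take_append_of_le_length _ _ _ hn.le]
      · obtain ⟨m, rfl⟩ := Nat.exists_eq_add_of_le hn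
        rw [← Stream'.append_take, ← Stream'.append_take,
          ih m (by simp [block]) _ hnext]
  refine ⟨contract z, Stream'.ext fun n => ?_⟩
  exact take_eq_take_iff.1 (htake (n + 1) z hz) n n.lt_succ_self

end Expand

/-- The set `boundedShift U` contains a nonempty set `X` closed under prepending the words `c e`,
which have no more letters of each kind than the period words `W e`. -/
def HasFreeWords (W : Bool → List Bool) (U : Bool → Stream' Bool) : Prop :=
  ∃ (c : Bool → List Bool) (X : Set (Stream' Bool)), X.Nonempty ∧ X ⊆ boundedShift U ∧
    ∀ e, (c e).head? = some e ∧ (∀ x ∈ X, c e ++ₛ x ∈ X) ∧ (c e).Subperm (W e)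

/-- The pair `V` is a desubstitution of the pair `U`: a tail of a string `expand f z` that starts
inside a block is preceded by the other letter, hence the leading letter of `U e` when such tails
can start with `e`. -/
structure IsExpansion (f : Bool → Bool) (U V : Bool → Stream' Bool) : Prop where
  head_eq : ∀ e, (V e).head = e
  eq_expand : ∀ e, U e = (if f (!e) then [e] else []) ++ₛ expand f (V e)

namespace IsExpansion

variable {f : Bool → Bool} {e : Bool} {z : Stream' Bool} {U V : Bool → Stream' Bool}
  {W : Bool → List Bool}

lemma sideLE_expand (h : IsExpansion f U V) (e : Bool) : SideLE e (U e) (expand f (V e)) := by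
  rw [h.eq_expand]
  split_ifs
  exacts [sideLE_cons_self e _, sideLE_refl e _]

lemma head_bound (h : IsExpansion f U V) (e : Bool) : (U e).head = e := by
  rw [h.eq_expand]
  split_ifs
  exacts [rfl, head_expand.trans (h.head_eq e)]

lemma expand_mem (h : IsExpansion f U V) (hz : z ∈ boundedShift V) :
    expand f z ∈ boundedShift U := by
  intro e n
  obtain ⟨m, hm⟩ | ⟨m, hfm, hm⟩ := drop_expand n f z
  · rw [hm]
    exact (h.sideLE_expand e).trans (sideLE_expand_iff.2 (hz e m))
  · rw [hm]
    obtain hzm | hzm := Bool.eq_or_eq_not (z.get m) e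
    · exact sideLE_of_head (h.head_bound e) (congrArg (! ·) hzm)
    · rw [hzm] at hfm
      rw [h.eq_expand, if_pos hfm, hzm, Bool.not_not]
      exact (sideLE_append_iff [e]).2 (sideLE_expand_iff.2 (hz e (m + 1)))

lemma expand_drop_mem (hz : expand f z ∈ boundedShift U) (n : ℕ) :
    expand f (z.drop n) ∈ boundedShift U := by
  rw [← z.append_take_drop n, expand_append] at hz
  simpa only [Stream'.drop_append_stream] using
    drop_mem_boundedShift hz ((z.take n).flatMap (block f)).length

lemma sideLE_tail (h : IsExpansion f U V) (hz : expand f z ∈ boundedShift U)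
    (hhead : z.head = !e) : SideLE e (V e) z.tail := by
  have hU := h.eq_expand e
  have hbound := hz e 1
  rw [← z.eta, expand_cons, hhead, hU, block] at hbound
  rw [← sideLE_expand_iff (f := f)]
  by_cases hf : f (!e)
  · simp only [hf, if_true, Bool.not_not] at hbound
    exact (sideLE_append_iff [e]).1 hbound
  · simp only [hf, if_false, Bool.false_eq_true] at hbound
    exact hbound

lemma sideLE_drop (h : IsExpansion f U V) (hz : expand f z ∈ boundedShift U) {m n : ℕ}
    (hm : z.get m = !e) (hmn : m < n) : SideLE e (V e) (z.drop n) := by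
  have hnext {i : ℕ} (hi : z.get i = !e) : SideLE e (V e) (z.drop (i + 1)) := by
    rw [← Stream'.tail_drop']
    exact h.sideLE_tail (expand_drop_mem hz i) (by rwa [Stream'.head_drop])
  induction n, hmn using Nat.le_induction with
  | base => exact hnext hm
  | succ n _ ih =>
    obtain hn | hn := Bool.eq_or_eq_not (z.get n) e
    · rw [← (z.drop n).eta, Stream'.head_drop, Stream'.tail_drop', hn] at ih
      exact ih.trans (sideLE_cons_self e _)
    · exact hnext hn

lemma drop_mem (h : IsExpansion f U V) (hz : expand f z ∈ boundedShift U) {m n : ℕ}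
    (hm : z.get m = e) (hn : z.get n = !e) (hmn : m < n) : z.drop n ∈ boundedShift V := by
  intro e' i
  rw [Stream'.drop_drop]
  obtain rfl | rfl := Bool.eq_or_eq_not e' e
  · obtain rfl | hi := i.eq_zero_or_pos
    · exact sideLE_of_head (h.head_eq e') (by rwa [Stream'.head_drop])
    · exact h.sideLE_drop hz hn (by lia)
  · exact h.sideLE_drop hz (by rwa [Bool.not_not]) (by lia)

lemma expand_bound_mem (h : IsExpansion f U V) (hU : ∀ e, U e ∈ boundedShift U) (e : Bool) :
    expand f (V e) ∈ boundedShift U := by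
  have hmem := hU e
  rw [h.eq_expand] at hmem
  exact Stream'.drop_append_stream _ (expand f (V e)) ▸ drop_mem_boundedShift hmem _

lemma bound_mem (h : IsExpansion f U V) (hU : ∀ e, U e ∈ boundedShift U) (e : Bool) :
    V e ∈ boundedShift V := by
  intro e' n
  obtain rfl | rfl := Bool.eq_or_eq_not e' e
  · by_cases hconst : ∀ i < n, (V e').get i = e'
    · exact sideLE_drop_of_forall_get_eq hconst
    · push Not at hconst
      obtain ⟨i, hi, hne⟩ := hconst
      exact h.sideLE_drop (h.expand_bound_mem hU e') (Bool.eq_not.2 hne) hi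
  · obtain rfl | hn := n.eq_zero_or_pos
    · exact sideLE_of_head (h.head_eq _) (by rw [Bool.not_not]; exact h.head_eq e)
    · exact h.sideLE_drop (h.expand_bound_mem hU e)
        (by rw [Bool.not_not]; exact h.head_eq e) hn

lemma exists_period (h : IsExpansion f U V) (hU : IsPeriodicPair W U) (e : Bool) :
    ∃ w : List Bool, w ≠ [] ∧ V e = w ++ₛ V e ∧ (w.flatMap (block f)).Perm (W e) := by
  obtain ⟨w, hperm, heq, hlast⟩ : ∃ w : List Bool, w.Perm (W e) ∧
      w ++ₛ expand f (V e) = expand f (V e) ∧ (f (!e) → w.getLast? = some e) := by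
    have hper := hU.eq_append e
    rw [h.eq_expand] at hper
    by_cases hf : f (!e)
    · obtain ⟨t, ht⟩ := hU.exists_cons e
      rw [h.head_bound] at ht
      rw [if_pos hf, ht] at hper
      refine ⟨t ++ [e], ht ▸ List.perm_append_singleton e t, ?_, fun _ => by simp⟩
      rw [Stream'.append_append_stream]
      exact (congrArg Stream'.tail hper).symm
    · rw [if_neg hf] at hper
      exact ⟨W e, .refl _, hper.symm, fun h => absurd h hf⟩
  obtain ⟨v, y, hv, rfl, hy⟩ | ⟨v, b, y, -, hb, rfl, hy⟩ := append_eq_expand heq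
  · rw [← expand_injective f hy] at hv
    refine ⟨v, ?_, hv, hperm⟩
    rintro rfl
    exact hU.ne_nil e hperm.nil_eq.symm
  · have hbe : e = !b := by
      rw [← h.head_eq e, ← head_expand (f := f), hy, Stream'.head_cons]
    rw [hbe, Bool.not_not] at hlast
    simpa using hlast hb

lemma isPeriodicPair (h : IsExpansion f U V) (hU : IsPeriodicPair W U) :
    ∃ w : Bool → List Bool, IsPeriodicPair w V ∧
      ∀ e, ((w e).flatMap (block f)).Perm (W e) := by
  choose w hne heq hperm using h.exists_period hU
  exact ⟨w, ⟨hne, heq, h.bound_mem hU.mem⟩, hperm⟩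

lemma subexponential (h : IsExpansion f U V) (hV : Subexponential (boundedShift V)) :
    Subexponential (boundedShift U ∩ range (expand f)) := by
  let C : Set (Stream' Bool) := {Stream'.const false} ∪ {Stream'.const true}
  have hC : Subexponential C := (subexponential_singleton _).union (subexponential_singleton _)
  have hmemC (e) : Stream'.const e ∈ C := by cases e <;> simp [C]
  refine ((hC.union (hC.splice hV)).image fun n x y => expand_take_eq (f := f)).subset ?_
  rintro _ ⟨hz, z, rfl⟩
  refine ⟨z, ?_, rfl⟩
  classical
  by_cases hconst : ∀ n, z.get n = z.get 0
  · exact .inl ((Stream'.ext hconst : z = Stream'.const (z.get 0)) ▸ hmemC _)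
  · push Not at hconst
    have hfind := Nat.find_spec hconst
    have hpos : 0 < Nat.find hconst := (Nat.find_pos hconst).2 fun h0 => h0 rfl
    refine .inr ⟨Nat.find hconst, _, hmemC (z.get 0), _,
      h.drop_mem hz rfl (Bool.eq_not.2 hfind) hpos, ?_⟩
    refine eq_append_drop_of_take_eq (take_eq_take_iff.2 fun i hi => ?_)
    exact not_not.1 (Nat.find_min hconst hi)

lemma hasFreeWords (h : IsExpansion f U V) {w : Bool → List Bool} (hV : HasFreeWords w V)
    (hw : ∀ e, ((w e).flatMap (block f)).Perm (W e)) : HasFreeWords W U := by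
  obtain ⟨c, X, hne, hsub, hc⟩ := hV
  refine ⟨fun e => (c e).flatMap (block f), expand f '' X, hne.image _, ?_, fun e => ?_⟩
  · rintro _ ⟨x, hx, rfl⟩
    exact h.expand_mem (hsub hx)
  · obtain ⟨hhead, hmem, l, hperm, hsublist⟩ := hc e
    obtain ⟨t, ht⟩ := List.head?_eq_some_iff.1 hhead
    refine ⟨by simp [ht, block], ?_, ?_⟩
    · rintro _ ⟨x, hx, rfl⟩
      exact ⟨_, hmem x hx, expand_append _ _⟩
    · have hblocks : ((c e).flatMap (block f)).Subperm ((w e).flatMap (block f)) :=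
        ⟨_, hperm.flatMap_right _, hsublist.flatMap _⟩
      exact hblocks.trans (hw e).subperm

end IsExpansion

/-- The string `e, !e, e, !e, …`. -/
def alternating (e : Bool) : Stream' Bool := fun n => n.bodd ^^ e

section Alternating

variable {e : Bool} {x : Stream' Bool} {U : Bool → Stream' Bool} {n : ℕ}

lemma alternating_eq_cons (e : Bool) : alternating e = e :: alternating (!e) := by
  ext n
  cases n with
  | zero => exact Bool.false_bne e
  | succ n =>
    change ((n + 1).bodd ^^ e) = (n.bodd ^^ !e)
    simp

lemma get_alternating_succ (e : Bool) (n : ℕ) :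
    (alternating e).get (n + 1) = !(alternating e).get n := by
  simp [alternating, Stream'.get]

lemma get_alternating_two_mul (e : Bool) (j : ℕ) : (alternating e).get (2 * j) = e := by
  simp [alternating, Stream'.get]

lemma get_alternating_two_mul_add_one (e : Bool) (j : ℕ) :
    (alternating e).get (2 * j + 1) = !e := by
  rw [get_alternating_succ, get_alternating_two_mul]

lemma take_alternating_add_two (n : ℕ) (e : Bool) :
    (alternating e).take (n + 2) = e :: (!e) :: (alternating e).take n := by
  conv_lhs => rw [alternating_eq_cons, alternating_eq_cons, Bool.not_not]
  rfl

lemma take_eq_take_alternating (h : ∀ i < n, x.get i ≠ x.get (i + 1)) :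
    x.take (n + 1) = (alternating x.head).take (n + 1) := by
  refine take_eq_take_iff.2 fun i hi => ?_
  induction i with
  | zero => exact (Bool.false_bne _).symm
  | succ i ih =>
    rw [get_alternating_succ, ← ih (by lia), Bool.eq_not]
    exact (h i (by lia)).symm

lemma get_succ_eq_not (hU : (U e).head = e) (hU1 : (U e).get 1 = !e) (hx : x ∈ boundedShift U)
    (hn : x.get n = e) : x.get (n + 1) = !e := by
  have h := ((hx e n).tail (by rw [hU, Stream'.head_drop, hn])).head
  rw [Stream'.tail_drop', Stream'.head_drop] at h
  rw [← not_sideLT, sideLT_bool] at h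
  rw [Bool.eq_not]
  exact fun hx1 => h ⟨hx1, hU1⟩

end Alternating

section BaseCase

variable {e : Bool} {x y : Stream' Bool} {U : Bool → Stream' Bool} {W : Bool → List Bool}

lemma cons_mem_of_sideLE (hhead : ∀ e, (U e).head = e) (hx : x ∈ boundedShift U)
    (h : SideLE e (U e) (e :: x)) : (e :: x) ∈ boundedShift U := by
  intro e' n
  cases n with
  | succ n => exact hx e' n
  | zero =>
    obtain rfl | rfl := Bool.eq_or_eq_not e' e
    · exact h
    · exact sideLE_of_head (hhead _) (Bool.not_not e).symm

lemma cons_mem_of_head (hhead : ∀ e, (U e).head = e) (hget : ∀ e, (U e).get 1 = e)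
    (hx : x ∈ boundedShift U) (hxe : x.head = !e) : (e :: x) ∈ boundedShift U := by
  refine cons_mem_of_sideLE hhead hx ?_
  rw [← (U e).eta, hhead, sideLE_cons]
  exact .inr ⟨rfl, sideLE_of_head (hget e) hxe⟩

lemma alternating_take_append_mem (hhead : ∀ e, (U e).head = e) (hget : ∀ e, (U e).get 1 = e)
    (hy : y ∈ boundedShift U) (n : ℕ) (e : Bool) (hye : y.head = (alternating e).get n) :
    (alternating e).take n ++ₛ y ∈ boundedShift U := by
  induction n generalizing e with
  | zero => exact hy
  | succ n ih =>
    rw [alternating_eq_cons] at hye ⊢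
    refine cons_mem_of_head hhead hget (ih (!e) hye) ?_
    rw [Stream'.tail_cons]
    cases n with
    | zero => exact hye.trans (Bool.false_bne _)
    | succ n =>
      rw [Stream'.take_succ, Stream'.cons_append_stream, Stream'.head_cons, alternating_eq_cons]
      rfl

lemma eq_const_or_eq_append (hU : IsPeriodicPair W U) (e : Bool) :
    U e = Stream'.const e ∨ ∃ t, W e = t ++ [!e] := by
  obtain ⟨t, a, ht⟩ := (W e).eq_nil_or_concat'.resolve_left (hU.ne_nil e)
  obtain rfl | rfl := Bool.eq_or_eq_not a e
  · have hper := hU.eq_append a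
    rw [ht, Stream'.append_append_stream] at hper
    have hbound := hU.mem a a t.length
    rw [hper, Stream'.drop_append_stream, ← hper] at hbound
    have hcons : U a = a :: U a := SideLE.antisymm hbound (sideLE_cons_self a _)
    refine .inl (Stream'.ext fun n => ?_)
    induction n with
    | zero =>
      rw [hcons]
      rfl
    | succ n ih =>
      rw [hcons]
      exact ih
  · exact .inr ⟨t, ht⟩

lemma length_eq_of_take_tail_eq_alternating {j : ℕ} {t : List Bool} (hU : IsPeriodicPair W U)
    (hhead : (U e).head = e) (hget : (U e).get 1 = e) (ht : W e = t ++ [!e])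
    (hagree : (U e).tail.take (2 * j + 1) = (alternating e).take (2 * j + 1))
    (hlt : (W e).length < 2 * j + 3) : (W e).length = 2 * j + 1 := by
  have hlen : (W e).length = t.length + 1 := by simp [ht]
  have hperiod (i : ℕ) : (U e).get ((W e).length + i) = (U e).get i := by
    conv_rhs => rw [← hU.drop_length e, Stream'.get_drop]
  have halt {i : ℕ} (hi : i < 2 * j + 1) : (U e).get (i + 1) = (alternating e).get i :=
    take_eq_take_iff.1 hagree i hi
  by_contra hne
  obtain heq | hle : t.length + 1 = 2 * j + 2 ∨ t.length + 1 < 2 * j + 1 := by lia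
  · have hlast : (U e).get t.length = !e := by
      rw [hU.eq_append e, ht, Stream'.append_append_stream, Stream'.get_append_length]
      rfl
    have hj : t.length = 2 * j + 1 := by lia
    rw [hj, halt (by lia), get_alternating_two_mul] at hlast
    exact Bool.not_ne_self e hlast.symm
  · have h0 := hperiod 0
    have h1 := hperiod 1
    rw [hlen, add_zero, halt (by lia)] at h0
    rw [hlen, halt hle, get_alternating_succ, h0, hget] at h1
    rw [show (U e).get 0 = e from hhead] at h1
    exact Bool.not_ne_self e h1

lemma exists_alternating_word_of_length_eq {j : ℕ} (hU : IsPeriodicPair W U)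
    (hhead : (U e).head = e)
    (hagree : (U e).tail.take (2 * j + 1) = (alternating e).take (2 * j + 1))
    (hlen : (W e).length = 2 * j + 1) :
    ((alternating e).take (2 * j + 1)).Perm (W e) ∧
      (U e).tail = (alternating e).take (2 * j + 1) ++ₛ (U e).tail := by
  constructor
  · rw [← hU.take_length, hlen, (U e).take_succ, hhead,
      take_eq_take_of_le (Nat.le_succ _) hagree, Stream'.take_succ', get_alternating_two_mul]
    exact List.perm_append_singleton _ _
  · conv_lhs => rw [eq_append_drop_of_take_eq hagree]
    rw [← hlen, ← Stream'.tail_drop, hU.drop_length]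

lemma exists_period_eq_append {l t : List Bool} {r : Stream' Bool} (hU : IsPeriodicPair W U)
    (hhead : (U e).head = e) (ht : W e = t ++ [!e]) (hr : (U e).tail = l ++ₛ e :: r)
    (hle : l.length + 2 ≤ (W e).length) :
    ∃ s : List Bool, W e = e :: l ++ e :: s ∧ (!e) ∈ s := by
  obtain ⟨s, hs⟩ : ∃ s, W e = e :: l ++ [e] ++ s := by
    refine hU.exists_eq_append (x := r) ?_ (List.length_append.trans_le hle)
    rw [← (U e).eta, hhead, hr, Stream'.append_append_stream]
    rfl
  rw [List.append_assoc, List.singleton_append] at hs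
  refine ⟨s, hs, ?_⟩
  rw [hs] at ht
  obtain rfl | ⟨s, a, rfl⟩ := s.eq_nil_or_concat'
  · exact absurd (List.append_inj' ht rfl).2 (by simp)
  · rw [← List.cons_append, ← List.append_assoc] at ht
    obtain rfl : a = !e := by simpa using (List.append_inj' ht rfl).2
    simp

lemma exists_alternating_word_of_append {j : ℕ} {r : Stream' Bool}
    (hr : (U e).tail = (alternating e).take (2 * j + 1) ++ₛ e :: r)
    {s : List Bool} (hs : W e = e :: (alternating e).take (2 * j + 1) ++ e :: s)
    (hmem : (!e) ∈ s) :
    ((alternating e).take (2 * (j + 1) + 1)).Subperm (W e) ∧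
      ∀ x, SideLE e (U e).tail ((alternating e).take (2 * (j + 1) + 1) ++ₛ x) := by
  constructor
  · rw [hs, mul_add_one, add_right_comm, take_alternating_add_two, List.cons_append,
      List.subperm_cons]
    have hcons : ((!e) :: (alternating e).take (2 * j + 1)).Subperm
        (s ++ (alternating e).take (2 * j + 1)) :=
      (List.subperm_append_right (l₁ := [!e]) _).2 (List.singleton_subperm_iff.2 hmem)
    exact (hcons.trans List.perm_append_comm.subperm).trans
      ((List.sublist_cons_self _ _).append_left _).subperm
  · intro x
    have htake : (alternating e).take (2 * (j + 1) + 1) =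
        (alternating e).take (2 * j + 1) ++ [!e, e] := by
      rw [mul_add_one, Stream'.take_succ', Stream'.take_succ', List.append_assoc]
      rw [← mul_add_one, get_alternating_two_mul, get_alternating_two_mul_add_one]
      rfl
    rw [hr, htake, Stream'.append_append_stream, sideLE_append_iff]
    exact sideLE_of_head rfl rfl

lemma exists_alternating_word (hU : IsPeriodicPair W U) (hhead : (U e).head = e)
    (hget : (U e).get 1 = e) (hlt : SideLT e (U e).tail (alternating e)) :
    ∃ i, ((alternating e).take (2 * i + 1)).Subperm (W e) ∧
      ∀ x, SideLE e (U e).tail x →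
        SideLE e (U e).tail ((alternating e).take (2 * i + 1) ++ₛ x) := by
  obtain hconst | ⟨t, ht⟩ := eq_const_or_eq_append hU e
  · obtain ⟨s, hs⟩ := hU.exists_cons e
    rw [hhead] at hs
    refine ⟨0, ?_, fun x _ => hconst ▸ sideLE_const e _⟩
    rw [alternating_eq_cons, hs]
    exact List.singleton_subperm_iff.2 List.mem_cons_self
  obtain ⟨m, hagree, hlt⟩ := sideLT_iff_exists_take.1 hlt
  obtain ⟨hm, hm'⟩ := sideLT_bool.1 hlt
  obtain ⟨j, rfl | rfl⟩ := m.even_or_odd'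
  · exact absurd (get_alternating_two_mul e j) (Bool.eq_not.1 hm')
  obtain hlt | hle := lt_or_ge (W e).length (2 * j + 3)
  · obtain ⟨hperm, htail⟩ := exists_alternating_word_of_length_eq hU hhead hagree
      (length_eq_of_take_tail_eq_alternating hU hhead hget ht hagree hlt)
    refine ⟨j, hperm.subperm, fun x hx => ?_⟩
    rw [htail]
    exact (sideLE_append_iff _).2 hx
  · obtain ⟨r, hr⟩ : ∃ r : Stream' Bool,
        (U e).tail = (alternating e).take (2 * j + 1) ++ₛ e :: r := by
      refine ⟨(U e).tail.drop (2 * j + 2), ?_⟩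
      conv_lhs => rw [eq_append_drop_of_take_eq hagree, ← ((U e).tail.drop _).eta]
      rw [Stream'.head_drop, Stream'.tail_drop', hm]
    obtain ⟨s, hs, hmem⟩ := exists_period_eq_append hU hhead ht hr (by simpa using hle)
    obtain ⟨hsub, hbound⟩ := exists_alternating_word_of_append hr hs hmem
    exact ⟨j + 1, hsub, fun x _ => hbound x⟩

lemma exists_word_not (hU : IsPeriodicPair W U) (hhead : ∀ e, (U e).head = e)
    (hget : ∀ e, (U e).get 1 = e) (e : Bool) :
    ∃ c : List Bool, c.head? = some (!e) ∧ c.Subperm (W (!e)) ∧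
      ∀ x ∈ boundedShift U, SideLE e (U e).tail x →
        c ++ₛ x ∈ boundedShift U ∧ SideLE e (U e).tail (c ++ₛ x) := by
  obtain ⟨s, hs⟩ := hU.exists_cons (!e)
  rw [hhead] at hs
  obtain hconst | ⟨t, ht⟩ := eq_const_or_eq_append hU (!e)
  · refine ⟨[!e], rfl, by simp [hs], fun x hx _ => ⟨?_, sideLE_of_head (hget e) rfl⟩⟩
    exact cons_mem_of_sideLE hhead hx (hconst ▸ sideLE_const _ _)
  · refine ⟨[!e, e], rfl, ?_, fun x hx hbound => ⟨?_, sideLE_of_head (hget e) rfl⟩⟩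
    · have hmem : e ∈ s := by
        cases t with
        | nil => simp [hs] at ht
        | cons b t =>
          rw [hs, Bool.not_not, List.cons_append, List.cons.injEq] at ht
          simp [ht.2]
      rw [hs]
      exact (List.subperm_cons _).2 (List.singleton_subperm_iff.2 hmem)
    · refine cons_mem_of_head hhead hget (cons_mem_of_sideLE hhead hx ?_) (Bool.not_not e).symm
      rw [← (U e).eta, hhead]
      exact (sideLE_append_iff [e]).2 hbound

theorem hasFreeWords_of_tail_lt_alternating (hU : IsPeriodicPair W U)
    (hhead : ∀ e, (U e).head = e) (hget : ∀ e, (U e).get 1 = e)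
    (hlt : SideLT e (U e).tail (alternating e)) : HasFreeWords W U := by
  obtain ⟨i, hperm, hbound⟩ := exists_alternating_word hU (hhead e) (hget e) hlt
  obtain ⟨c, hc, hcperm, hcmem⟩ := exists_word_not hU hhead hget e
  have halt : ∀ x ∈ boundedShift U, SideLE e (U e).tail x →
      (alternating e).take (2 * i + 1) ++ₛ x ∈ boundedShift U := by
    intro x hx hxe
    have hget2i := get_alternating_two_mul e i
    rw [Stream'.take_succ', hget2i, Stream'.append_append_stream]
    refine alternating_take_append_mem hhead hget (cons_mem_of_sideLE hhead hx ?_) _ _ hget2i.symm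
    rw [← (U e).eta, hhead]
    exact (sideLE_append_iff [e]).2 hxe
  refine ⟨fun e' => if e' = e then (alternating e).take (2 * i + 1) else c,
    {x ∈ boundedShift U | SideLE e (U e).tail x},
    ⟨(U e).tail, drop_mem_boundedShift (hU.mem e) 1, sideLE_refl e _⟩, fun x hx => hx.1,
    fun e' => ?_⟩
  obtain rfl | rfl := Bool.eq_or_eq_not e' e
  · simp only [if_true]
    exact ⟨by rw [alternating_eq_cons, Stream'.take_succ_cons, List.head?_cons],
      fun x hx => ⟨halt x hx.1 hx.2, hbound x hx.2⟩, hperm⟩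
  · simp only [Bool.not_eq_self, if_false]
    exact ⟨hc, fun x hx => hcmem x hx.1 hx.2, hcperm⟩

end BaseCase

section BinaryDichotomy

variable {e : Bool} {f : Bool → Bool} {x z : Stream' Bool} {U V : Bool → Stream' Bool}
  {W : Bool → List Bool}

lemma length_flatMap_block (w : List Bool) :
    (w.flatMap (block f)).length = w.length + w.countP f := by
  induction w with
  | nil => rfl
  | cons b w ih =>
    rw [List.flatMap_cons, List.length_append, ih, List.length_cons, List.countP_cons, block]
    split_ifs <;> simp <;> lia

lemma IsExpansion.exists_shorter_period (h : IsExpansion f U V) (hU : IsPeriodicPair W U)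
    (hf : ∃ e, f e) : ∃ w, IsPeriodicPair w V ∧
      (∀ e, ((w e).flatMap (block f)).Perm (W e)) ∧
      (w false).length + (w true).length < (W false).length + (W true).length := by
  obtain ⟨w, hw, hperm⟩ := h.isPeriodicPair hU
  refine ⟨w, hw, hperm, ?_⟩
  have hlen (e) : (w e).length + (w e).countP f = (W e).length := by
    rw [← length_flatMap_block, (hperm e).length_eq]
  have hcount (e) (hfe : f e) : 0 < (w e).countP f := by
    obtain ⟨t, ht⟩ := hw.exists_cons e
    rw [List.countP_pos_iff]
    exact ⟨e, by simp [ht, h.head_eq], hfe⟩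
  have h0 := hlen false
  have h1 := hlen true
  obtain ⟨e, he⟩ := hf
  have := hcount e he
  cases e <;> lia

lemma exists_isExpansion
    (h : ∀ e, if f (!e) then (U e).get 1 = e ∧ (U e).tail ∈ range (expand f)
      else U e ∈ range (expand f))
    (hhead : ∀ e, (U e).head = e) : ∃ V, IsExpansion f U V := by
  have hV (e) : ∃ v : Stream' Bool, v.head = e ∧
      U e = (if f (!e) then [e] else []) ++ₛ expand f v := by
    have he := h e
    split_ifs at he ⊢
    · obtain ⟨hget, v, hv⟩ := he
      refine ⟨v, ?_, ?_⟩
      · rw [← head_expand (f := f), hv]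
        exact hget
      · rw [hv, ← (U e).eta, hhead]
        rfl
    · obtain ⟨v, hv⟩ := he
      exact ⟨v, by rw [← head_expand (f := f), hv, hhead], hv.symm⟩
  choose V hhead heq using hV
  exact ⟨V, hhead, heq⟩

lemma subexponential_of_forall_get_one_eq_not (hhead : ∀ e, (U e).head = e)
    (hget : ∀ e, (U e).get 1 = !e) : Subexponential (boundedShift U) := by
  refine ((subexponential_singleton (alternating false)).union
    (subexponential_singleton (alternating true))).subset fun x hx => ?_
  have hx' : x = alternating x.head := by
    refine Stream'.ext fun n => take_eq_take_iff.1
      (take_eq_take_alternating (n := n) fun i _ => ?_) n n.lt_succ_self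
    rw [get_succ_eq_not (hhead _) (hget _) hx rfl]
    exact (Bool.not_ne_self _).symm
  rw [hx']
  cases x.head <;> simp

lemma boundedShift_subset_range_expand (hhead : (U e).head = e) (hget : (U e).get 1 = !e) :
    boundedShift U ⊆ range (expand (· == e)) := by
  refine fun x hx => mem_range_expand (fun z hz => ?_) hx
  split_ifs with hze
  · have hz0 : z.head = e := beq_iff_eq.1 hze
    exact ⟨(get_succ_eq_not hhead hget hz hz0).trans (congrArg _ hz0.symm),
      drop_mem_boundedShift hz 2⟩
  · exact drop_mem_boundedShift hz 1

lemma sideLE_alternating_drop (hhead : (U e).head = e) (hle : SideLE e (alternating e) (U e).tail)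
    (hx : x ∈ boundedShift U) {n : ℕ} (hn : x.get n = e) :
    SideLE e (alternating e) (x.drop (n + 1)) := by
  have htail := (hx e n).tail (hhead.trans (by rw [Stream'.head_drop, hn]))
  rw [Stream'.tail_drop'] at htail
  exact hle.trans htail

lemma get_one_eq_not_of_sideLE_alternating (h : SideLE z.head (alternating z.head) z) :
    z.get 1 = !z.head := by
  have hhead := (h.tail (Bool.false_bne _)).head
  rw [← not_sideLT, sideLT_bool] at hhead
  rw [Bool.eq_not]
  exact fun hz => hhead ⟨hz, by rw [alternating_eq_cons]; exact Bool.false_bne _⟩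

lemma mem_range_expand_of_sideLE_alternating (hhead : ∀ e, (U e).head = e)
    (hle : ∀ e, SideLE e (alternating e) (U e).tail) (hz : z ∈ boundedShift U)
    (hzle : ∀ e, SideLE e (alternating e) z) : z ∈ range (expand fun _ => true) := by
  let Q : Set (Stream' Bool) := {z ∈ boundedShift U | ∀ e, SideLE e (alternating e) z}
  refine mem_range_expand (Q := Q) ?_ ⟨hz, hzle⟩
  rintro z ⟨hz, hzle⟩
  have hz1 := get_one_eq_not_of_sideLE_alternating (hzle z.head)
  rw [if_pos rfl]
  refine ⟨hz1, drop_mem_boundedShift hz 2, fun e => ?_⟩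
  obtain he | he := Bool.eq_or_eq_not e z.head
  · have htail := (hzle e).tail ((Bool.false_bne _).trans he)
    rw [alternating_eq_cons] at htail
    have htail' := htail.tail (by rw [alternating_eq_cons, he]; exact hz1.symm)
    rw [alternating_eq_cons] at htail'
    simpa using htail'
  · exact sideLE_alternating_drop (hhead e) (hle e) hz (hz1.trans he.symm)

lemma drop_succ_mem_range_expand (hhead : ∀ e, (U e).head = e)
    (hle : ∀ e, SideLE e (alternating e) (U e).tail) (hx : x ∈ boundedShift U) {n : ℕ}
    (hn : x.get n = x.get (n + 1)) : x.drop (n + 1) ∈ range (expand fun _ => true) := by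
  refine mem_range_expand_of_sideLE_alternating hhead hle (drop_mem_boundedShift hx _) fun e => ?_
  obtain he | he := Bool.eq_or_eq_not (x.get n) e
  · exact sideLE_alternating_drop (hhead e) (hle e) hx he
  · exact sideLE_of_head (Bool.false_bne e) (by rw [Stream'.head_drop, ← hn, he])

lemma boundedShift_subset_union_splice_alternating (hhead : ∀ e, (U e).head = e)
    (hle : ∀ e, SideLE e (alternating e) (U e).tail) :
    boundedShift U ⊆ range alternating ∪
      splice (range alternating) (boundedShift U ∩ range (expand fun _ => true)) := by
  classical
  intro x hx
  by_cases halt : ∀ n, x.get n ≠ x.get (n + 1)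
  · exact .inl ⟨x.head, Stream'.ext fun n => (take_eq_take_iff.1
      (take_eq_take_alternating (n := n) fun i _ => halt i) n n.lt_succ_self).symm⟩
  · push Not at halt
    have htail := drop_succ_mem_range_expand hhead hle hx (Nat.find_spec halt)
    refine .inr ⟨Nat.find halt + 1, _, ⟨x.head, rfl⟩, x.drop (Nat.find halt + 1),
      ⟨drop_mem_boundedShift hx _, htail⟩, ?_⟩
    exact eq_append_drop_of_take_eq (take_eq_take_alternating fun i hi => Nat.find_min halt hi)

lemma subexponential_range_alternating : Subexponential (range alternating) := by
  rw [Bool.range_eq]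
  exact (subexponential_singleton _).union (subexponential_singleton _)

lemma exists_isExpansion_of_get_one (hU : IsPeriodicPair W U) (hhead : ∀ e, (U e).head = e)
    (hget : (U e).get 1 = !e) (hget' : (U (!e)).get 1 = !e) :
    ∃ V, IsExpansion (· == e) U V := by
  have hrange := boundedShift_subset_range_expand (hhead e) hget
  refine exists_isExpansion (fun e' => ?_) hhead
  split_ifs with he'
  · obtain rfl : e = !e' := (beq_iff_eq.1 he').symm
    rw [Bool.not_not] at hget'
    exact ⟨hget', hrange (drop_mem_boundedShift (hU.mem _) 1)⟩
  · exact hrange (hU.mem e')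

lemma exists_isExpansion_of_sideLE_alternating (hU : IsPeriodicPair W U)
    (hhead : ∀ e, (U e).head = e) (hget : ∀ e, (U e).get 1 = e)
    (hle : ∀ e, SideLE e (alternating e) (U e).tail) : ∃ V, IsExpansion (fun _ => true) U V := by
  refine exists_isExpansion (fun e => ?_) hhead
  rw [if_pos rfl]
  exact ⟨hget e, drop_succ_mem_range_expand hhead hle (hU.mem e) ((hhead e).trans (hget e).symm)⟩

theorem IsPeriodicPair.subexponential_or_hasFreeWords (hU : IsPeriodicPair W U)
    (hhead : ∀ e, (U e).head = e) : Subexponential (boundedShift U) ∨ HasFreeWords W U := by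
  obtain ⟨n, hn⟩ : ∃ n, (W false).length + (W true).length = n := ⟨_, rfl⟩
  induction n using Nat.strong_induction_on generalizing W U with
  | _ n ih =>
  have hexpansion {f V} (h : IsExpansion f U V) (hf : ∃ e, f e)
      (hcover : Subexponential (boundedShift U ∩ range (expand f)) →
        Subexponential (boundedShift U)) :
      Subexponential (boundedShift U) ∨ HasFreeWords W U := by
    obtain ⟨w, hw, hperm, hlt⟩ := h.exists_shorter_period hU hf
    exact (ih _ (hlt.trans_eq hn) hw h.head_eq rfl).imp
      (fun hV => hcover (h.subexponential hV)) (fun hV => h.hasFreeWords hV hperm)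
  by_cases hget : ∃ e, (U e).get 1 = !e
  · obtain ⟨e, he⟩ := hget
    obtain he' | he' := Bool.eq_or_eq_not ((U (!e)).get 1) (!e)
    · obtain ⟨V, hV⟩ := exists_isExpansion_of_get_one hU hhead he he'
      refine hexpansion hV ⟨e, beq_self_eq_true e⟩ fun h => h.subset ?_
      exact subset_inter subset_rfl (boundedShift_subset_range_expand (hhead e) he)
    · refine .inl (subexponential_of_forall_get_one_eq_not hhead fun e' => ?_)
      obtain rfl | rfl := Bool.eq_or_eq_not e' e
      exacts [he, he']
  · simp only [not_exists, Bool.eq_not, not_not] at hget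
    by_cases hlt : ∃ e, SideLT e (U e).tail (alternating e)
    · exact .inr (hasFreeWords_of_tail_lt_alternating hU hhead hget hlt.choose_spec)
    · simp only [not_exists, not_sideLT] at hlt
      obtain ⟨V, hV⟩ := exists_isExpansion_of_sideLE_alternating hU hhead hget hlt
      refine hexpansion hV ⟨true, rfl⟩ fun h => ?_
      have halt := subexponential_range_alternating
      exact (halt.union (halt.splice h)).subset
        (boundedShift_subset_union_splice_alternating hhead hlt)

end BinaryDichotomy

/-- The Kraft inequality for the words `W false` and `W true`, with respect to every exponential
growth rate `L` of the number of prefixes of strings in `A`. -/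
def KraftLE (W : Bool → List α) (A : Set (Stream' β)) : Prop :=
  ∀ L : ℝ, 1 ≤ L → GrowthLE A L → (1 / L) ^ (W false).length + (1 / L) ^ (W true).length ≤ 1

lemma KraftLE.of_growthLE {γ : Type*} {W : Bool → List α} {W' : Bool → List γ}
    {A : Set (Stream' β)} {B : Set (Stream' γ)} (hB : KraftLE W' B)
    (hlen : ∀ e, (W' e).length = (W e).length)
    (h : ∀ L : ℝ, 1 ≤ L → GrowthLE A L → GrowthLE B L) : KraftLE W A := fun L hL hA => by
  simpa only [hlen] using hB L hL (h L hL hA)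

lemma IsFreePair.kraftLE {A : Set (Stream' α)} {w W : Bool → List α} (hw : IsFreePair A w)
    (hlen : ∀ e, (w e).length ≤ (W e).length) : KraftLE W A := by
  intro L hL hA
  have hL0 : 0 < L := one_pos.trans_le hL
  have hle (e) : (1 / L) ^ (W e).length ≤ (1 / L) ^ (w e).length :=
    pow_le_pow_of_le_one (by positivity) ((div_le_one hL0).2 hL) (hlen e)
  exact (add_le_add (hle false) (hle true)).trans (hw.add_pow_le_one hL0 hA)

lemma HasFreeWords.kraftLE {W : Bool → List Bool} {U : Bool → Stream' Bool}
    (h : HasFreeWords W U) : KraftLE W (boundedShift U) := by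
  obtain ⟨c, X, hne, hsub, hc⟩ := h
  have hfree : IsFreePair X c := by
    refine ⟨hne, fun e hnil => ?_, ?_, fun e => (hc e).2.1⟩
    · simpa [hnil] using (hc e).1
    · simp [(hc _).1]
  exact fun L hL hU => hfree.kraftLE (fun e => (hc e).2.2.length_le) L hL (hU.subset hsub)

section InteriorLetters

variable [LinearOrder α] {e : Bool} {c d : α} {x : Stream' α} {U : Bool → Stream' α}
  {W : Bool → List α}

lemma cons_mem_boundedShift {a : α} (hx : x ∈ boundedShift U)
    (h : ∀ e, SideLE e (U e) (a :: x)) : (a :: x) ∈ boundedShift U := by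
  intro e n
  cases n with
  | zero => exact h e
  | succ n => exact hx e n

lemma cons_mem_of_sideLT_head (hc : ∀ e, SideLT e (U e).head c) (hx : x ∈ boundedShift U) :
    (c :: x) ∈ boundedShift U :=
  cons_mem_boundedShift hx fun e => (SideLT.of_head (hc e)).le

lemma const_take_append_mem (hc : ∀ e, SideLT e (U e).head c) (hx : x ∈ boundedShift U) (n : ℕ) :
    (Stream'.const c).take n ++ₛ x ∈ boundedShift U := by
  induction n with
  | zero => exact hx
  | succ n ih => exact cons_mem_of_sideLT_head hc ih

lemma isFreePair_of_ne_of_sideLT_head (hc : ∀ e, SideLT e (U e).head c)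
    (hd : ∀ e, SideLT e (U e).head d) (hcd : c ≠ d) (hU : ∀ e, U e ∈ boundedShift U) :
    IsFreePair (boundedShift U) fun e => cond e [d] [c] where
  nonempty := ⟨_, hU false⟩
  ne_nil e := by cases e <;> simp
  head_ne := by simpa using hcd
  append_mem e x hx := by
    cases e
    exacts [cons_mem_of_sideLT_head hc hx, cons_mem_of_sideLT_head hd hx]

lemma IsPeriodicPair.exists_word_of_sideLE_const (hU : IsPeriodicPair W U)
    (hc : SideLT e (U e).head c) (hle : SideLE e (U e).tail (Stream'.const c)) :
    ∃ m, m < (W e).length ∧ ∀ x ∈ boundedShift U,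
      SideLE e (U e) ((U e).head :: (Stream'.const c).take m ++ₛ x) := by
  obtain ⟨t, ht⟩ := hU.exists_cons e
  have hlen : (W e).length = t.length + 1 := by simp [ht]
  have hne : (U e).tail.get t.length ≠ c := by
    have hhead : (U e).tail.get t.length = (U e).head := by
      conv_rhs => rw [← hU.drop_length e, hlen, Stream'.head_drop]
      rfl
    intro h
    exact not_sideLT.2 (sideLE_refl e c) (by rwa [← hhead, h] at hc)
  have hlt : SideLT e (U e).tail (Stream'.const c) :=
    (sideLE_iff_eq_or_sideLT.1 hle).resolve_left fun h => hne (h ▸ rfl)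
  obtain ⟨k, htake, hk⟩ := sideLT_iff_exists_take.1 hlt
  obtain hkt | rfl | hkt := lt_trichotomy k t.length
  · refine ⟨k + 1, by lia, fun x _ => ?_⟩
    have hbound : SideLE e (U e).tail ((Stream'.const c).take (k + 1) ++ₛ x) := by
      rw [eq_append_drop_of_take_eq htake, Stream'.take_succ', Stream'.append_append_stream]
      refine (sideLE_append_iff _).2 (SideLT.of_head ?_).le
      rwa [Stream'.head_drop]
    conv => enter [2]; rw [← (U e).eta]
    exact (sideLE_append_iff [(U e).head]).2 hbound
  · refine ⟨t.length, by lia, fun x hx => ?_⟩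
    have hW : W e = ((U e).head :: (Stream'.const c).take t.length : List α) := by
      rw [← hU.take_length, hlen, Stream'.take_succ, htake]
    rw [← hW]
    conv => enter [2]; rw [hU.eq_append]
    exact (sideLE_append_iff _).2 (sideLE_of_mem_boundedShift hx e)
  · exact absurd (take_eq_take_iff.1 htake _ hkt) hne

lemma IsPeriodicPair.exists_isFreePair_of_sideLE_const (hU : IsPeriodicPair W U)
    (hc : ∀ e, SideLT e (U e).head c) (hle : SideLE e (U e).tail (Stream'.const c)) :
    ∃ w : Bool → List α, IsFreePair (boundedShift U) w ∧ ∀ e, (w e).length ≤ (W e).length := by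
  obtain ⟨m, hm, hmem⟩ := hU.exists_word_of_sideLE_const (hc e) hle
  have hne : (U e).head ≠ c := fun h => not_sideLT.2 (sideLE_refl e c) (h ▸ hc e)
  refine ⟨fun e' => if e' = e then (U e).head :: (Stream'.const c).take m else [c],
    ⟨⟨_, hU.mem e⟩, fun e' => ?_, ?_, fun e' x hx => ?_⟩, fun e' => ?_⟩
  · split_ifs <;> simp
  · cases e <;> simp [hne, hne.symm]
  · split_ifs
    · refine cons_mem_boundedShift (const_take_append_mem hc hx m) fun e' => ?_
      obtain rfl | rfl := Bool.eq_or_eq_not e' e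
      · exact hmem x hx
      · refine (SideLT.of_head ?_).le
        exact sideLT_not.2 ((hc e).trans (sideLT_not.1 (hc !e)))
    · exact cons_mem_of_sideLT_head hc hx
  · dsimp only
    split_ifs with he
    · simpa [he] using hm
    · exact List.length_pos_iff.2 (hU.ne_nil e')

end InteriorLetters

section TwoLetters

variable [LinearOrder α] {e : Bool} {x y : Stream' Bool} {U : Bool → Stream' α}
  {W : Bool → List α}

lemma sideLT_map {l : Bool → α} (hl : StrictMono l) (h : SideLT e x y) :
    SideLT e (x.map l) (y.map l) := by
  obtain ⟨m, htake, hlt⟩ := sideLT_iff_exists_take.1 h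
  refine sideLT_iff_exists_take.2 ⟨m, take_eq_take_iff.2 fun i hi => ?_, ?_⟩
  · exact congrArg l (take_eq_take_iff.1 htake i hi)
  · cases e
    exacts [hl hlt, hl hlt]

lemma sideLE_map_iff {l : Bool → α} (hl : StrictMono l) :
    SideLE e (x.map l) (y.map l) ↔ SideLE e x y := by
  refine ⟨fun h => not_sideLT.1 fun hlt => not_sideLT.2 h (sideLT_map hl hlt), fun h => ?_⟩
  obtain rfl | hlt := sideLE_iff_eq_or_sideLT.1 h
  exacts [sideLE_refl e _, (sideLT_map hl hlt).le]

lemma map_mem_boundedShift_iff {l : Bool → α} (hl : StrictMono l) {V : Bool → Stream' Bool}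
    (hUV : ∀ e, U e = (V e).map l) : x.map l ∈ boundedShift U ↔ x ∈ boundedShift V := by
  refine forall₂_congr fun e n => ?_
  rw [hUV, Stream'.drop_map, sideLE_map_iff hl]

lemma IsPeriodicPair.subexponential_or_kraftLE_of_forall_not (hU : IsPeriodicPair W U)
    (hlt : (U false).head < (U true).head) (hno : ∀ c, ¬ ∀ e, SideLT e (U e).head c) :
    Subexponential (boundedShift U) ∨ KraftLE W (boundedShift U) := by
  let l (e : Bool) : α := (U e).head
  let g (a : α) : Bool := decide (a = l true)
  have hl : StrictMono l := fun a b hab => by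
    cases a <;> cases b <;> first | exact absurd hab (lt_irrefl _) | exact hlt | cases hab
  have hgl (b) : g (l b) = b := by cases b <;> simp [g, hl.injective.eq_iff]
  have hmap {x : Stream' α} (hx : x ∈ boundedShift U) : (x.map g).map l = x := by
    refine Stream'.ext fun n => ?_
    obtain ⟨e, he⟩ := not_forall.1 (hno (x.get n))
    have hle : SideLE e (l e) (x.get n) := by
      simpa only [Stream'.head_drop] using (hx e n).head
    have hget : l e = x.get n := hle.antisymm (not_sideLT.1 he)
    rw [Stream'.get_map, Stream'.get_map, ← hget, hgl]
  let V (e : Bool) : Stream' Bool := (U e).map g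
  have hmem {z : Stream' Bool} : z.map l ∈ boundedShift U ↔ z ∈ boundedShift V :=
    map_mem_boundedShift_iff hl fun e => (hmap (hU.mem e)).symm
  have hV : IsPeriodicPair (fun e => (W e).map g) V := by
    refine ⟨fun e => by simpa using hU.ne_nil e, fun e => ?_, fun e => ?_⟩
    · rw [← Stream'.map_append_stream, ← hU.eq_append]
    · rw [← hmem, hmap (hU.mem e)]
      exact hU.mem e
  obtain hthin | hfree := hV.subexponential_or_hasFreeWords fun e => hgl e
  · refine .inl ((hthin.image fun n x y => map_take_eq l).subset fun x hx => ?_)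
    exact ⟨x.map g, hmem.1 ((hmap hx).symm ▸ hx), hmap hx⟩
  · refine .inr (hfree.kraftLE.of_growthLE (fun e => List.length_map _) fun L _ hG => ?_)
    refine (hG.image fun n x y => map_take_eq g).subset fun z hz => ⟨z.map l, hmem.2 hz, ?_⟩
    rw [Stream'.map_map]
    exact Stream'.ext fun n => hgl _

end TwoLetters

section TransitionCode

variable {e : Bool} {c : α} {l : Bool → α} {y z : Stream' Bool} {n : ℕ}

/-- The string of the transitions between consecutive letters of `y`: it has the letter `c` where
the letter of `y` is repeated, and the letter `l b` where it changes to `b`. -/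
def transitions (c : α) (l : Bool → α) (y : Stream' Bool) : Stream' α :=
  Stream'.zip (fun a b => if a = b then c else l b) y y.tail

/-- The transitions of `y`, preceded by the letter that stands for a change to the first letter. -/
def transitionCode (c : α) (l : Bool → α) (y : Stream' Bool) : Stream' α :=
  l y.head :: transitions c l y

/-- The binary string with first letter `e` that keeps its letter where `x` has the letter `c`, and
changes it where `x` has another letter. -/
def ofTransitions [DecidableEq α] (c : α) (e : Bool) (x : Stream' α) : Stream' Bool :=
  Stream'.corec Prod.fst (fun s => (if s.2.head = c then s.1 else !s.1, s.2.tail)) (e, x)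

lemma transitions_cons_cons (a b : Bool) (y : Stream' Bool) :
    transitions c l (a :: b :: y) = (if a = b then c else l b) :: transitions c l (b :: y) :=
  Stream'.zip_eq _ _ _

lemma ofTransitions_eq_cons [DecidableEq α] (c : α) (e : Bool) (x : Stream' α) :
    ofTransitions c e x = e :: ofTransitions c (if x.head = c then e else !e) x.tail :=
  Stream'.corec_eq _ _ _

lemma transitions_ofTransitions_eq_cons [DecidableEq α] (e : Bool) (x : Stream' α) :
    transitions c l (ofTransitions c e x) = (if x.head = c then c else l !e) ::
      transitions c l (ofTransitions c (if x.head = c then e else !e) x.tail) := by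
  rw [ofTransitions_eq_cons, ofTransitions_eq_cons, transitions_cons_cons,
    ← ofTransitions_eq_cons]
  split_ifs <;> simp_all

lemma transitionCode_take_eq (h : y.take n = z.take n) :
    (transitionCode c l y).take n = (transitionCode c l z).take n := by
  refine take_eq_take_iff.2 fun i hi => ?_
  have hget := take_eq_take_iff.1 h
  cases i with
  | zero => exact congrArg l (hget 0 hi)
  | succ i =>
    change (if y.get i = y.get (i + 1) then c else l (y.get (i + 1))) =
      if z.get i = z.get (i + 1) then c else l (z.get (i + 1))
    rw [hget i (by lia), hget (i + 1) hi]

lemma ofTransitions_take_eq [DecidableEq α] {x x' : Stream' α} (h : x.take n = x'.take n) :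
    (ofTransitions c e x).take n = (ofTransitions c e x').take n := by
  induction n generalizing e x x' with
  | zero => rfl
  | succ n ih =>
    rw [Stream'.take_succ, Stream'.take_succ, List.cons.injEq] at h
    rw [ofTransitions_eq_cons, ofTransitions_eq_cons c e x', Stream'.take_succ_cons,
      Stream'.take_succ_cons, h.1, ih h.2]

lemma ofTransitions_transitions [DecidableEq α] (hl : ∀ b, l b ≠ c) (y : Stream' Bool) :
    ofTransitions c y.head (transitions c l y) = y := by
  refine Stream'.ext fun n => ?_
  induction n generalizing y with
  | zero => rfl
  | succ n ih =>
    conv_lhs => rw [← y.eta, ← y.tail.eta, transitions_cons_cons, ofTransitions_eq_cons]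
    have hhead : (if (if y.head = y.tail.head then c else l y.tail.head) = c then y.head
        else !y.head) = y.tail.head := by
      split_ifs with h h' h'
      exacts [h, absurd rfl h', absurd h' (hl _), (Bool.eq_not.2 (Ne.symm h)).symm]
    rw [Stream'.head_cons, Stream'.tail_cons, Stream'.head_cons, hhead, Stream'.eta]
    exact ih y.tail

lemma drop_transitionCode_of_get_ne (h : (transitionCode c l y).get n ≠ c) :
    (transitionCode c l y).drop n = transitionCode c l (y.drop n) := by
  cases n with
  | zero => rfl
  | succ n =>
    have hne : y.get n ≠ y.get (n + 1) := fun heq => h (if_pos heq)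
    have hget : (transitionCode c l y).get (n + 1) = l (y.get (n + 1)) := if_neg hne
    have htail : ((transitionCode c l y).drop (n + 1)).tail = transitions c l (y.drop (n + 1)) := by
      rw [Stream'.tail_drop, transitions, Stream'.tail_drop]
      exact Stream'.drop_zip ..
    rw [← ((transitionCode c l y).drop (n + 1)).eta, Stream'.head_drop, hget, htail, transitionCode,
      Stream'.head_drop]

variable [LinearOrder α] {U : Bool → Stream' α} {V : Bool → Stream' Bool}

lemma sideLT_transitionCode (hl : ∀ e, SideLT e (l e) c) (h : SideLT e y z) :
    SideLT e (transitionCode c l y) (transitionCode c l z) := by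
  obtain ⟨m, htake, hlt⟩ := sideLT_iff_exists_take.1 h
  refine sideLT_iff_exists_take.2 ⟨m, transitionCode_take_eq htake, ?_⟩
  obtain ⟨hy, hz⟩ := sideLT_bool.1 hlt
  have hlc : SideLT e c (l !e) := sideLT_not.1 (hl !e)
  cases m with
  | zero =>
    change SideLT e (l (y.get 0)) (l (z.get 0))
    rw [hy, hz]
    exact (hl e).trans hlc
  | succ m =>
    change SideLT e (if y.get m = y.get (m + 1) then c else l (y.get (m + 1)))
      (if z.get m = z.get (m + 1) then c else l (z.get (m + 1)))
    rw [hy, hz, take_eq_take_iff.1 htake m m.lt_succ_self]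
    obtain h | h := Bool.eq_or_eq_not (z.get m) e
    · simpa [h] using hlc
    · simpa [h] using hl e

lemma sideLE_transitionCode_iff (hl : ∀ e, SideLT e (l e) c) :
    SideLE e (transitionCode c l y) (transitionCode c l z) ↔ SideLE e y z := by
  refine ⟨fun h => not_sideLT.1 fun hlt => not_sideLT.2 h (sideLT_transitionCode hl hlt),
    fun h => ?_⟩
  obtain rfl | hlt := sideLE_iff_eq_or_sideLT.1 h
  exacts [sideLE_refl e _, (sideLT_transitionCode hl hlt).le]

lemma transitionCode_injective (hl : ∀ e, SideLT e (l e) c) :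
    Function.Injective (transitionCode c l) := fun _ _ h =>
  SideLE.antisymm (e := false) ((sideLE_transitionCode_iff hl).1 (le_of_eq h))
    ((sideLE_transitionCode_iff hl).1 (le_of_eq h.symm))

lemma transitionCode_mem_boundedShift (hl : ∀ e, SideLT e (l e) c)
    (hUV : ∀ e, U e = transitionCode c l (V e)) (hV : ∀ e, (V e).head = e)
    (hy : y ∈ boundedShift V) : transitionCode c l y ∈ boundedShift U := by
  intro e n
  by_cases hc : (transitionCode c l y).get n = c
  · refine (SideLT.of_head ?_).le
    rw [Stream'.head_drop, hc, hUV]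
    simpa only [transitionCode, Stream'.head_cons, hV] using hl e
  · rw [drop_transitionCode_of_get_ne hc, hUV]
    exact (sideLE_transitionCode_iff hl).2 (hy e n)

lemma mem_boundedShift_of_transitionCode_mem (hl : ∀ e, SideLT e (l e) c)
    (hUV : ∀ e, U e = transitionCode c l (V e)) (hV : ∀ e, (V e).head = e)
    (hy : transitionCode c l y ∈ boundedShift U) : y ∈ boundedShift V := by
  have hcl (e) : l e ≠ c := fun h => not_sideLT.2 (sideLE_refl e c) (h ▸ hl e)
  have hdrop {e n} (hn : (transitionCode c l y).get n = l e) : SideLE e (V e) (y.drop n) := by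
    rw [← sideLE_transitionCode_iff hl, ← hUV, ← drop_transitionCode_of_get_ne (hn ▸ hcl e)]
    exact hy e n
  intro e n
  obtain hn | hn := Bool.eq_or_eq_not (y.get n) e
  swap
  · exact sideLE_of_head (hV e) ((Stream'.head_drop _ _).trans hn)
  induction n with
  | zero => exact hdrop (congrArg l hn)
  | succ n ih =>
    obtain hn' | hn' := Bool.eq_or_eq_not (y.get n) e
    · refine (ih hn').trans ?_
      rw [← (y.drop n).eta, Stream'.head_drop, hn', Stream'.tail_drop']
      exact sideLE_cons_self e _
    · refine hdrop ((if_neg ?_).trans (congrArg l hn))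
      simp [Stream'.get_tail, hn, hn']

end TransitionCode

section CentralLetter

variable [LinearOrder α] {e : Bool} {c : α} {x : Stream' α} {U : Bool → Stream' α}
  {V : Bool → Stream' Bool} {W : Bool → List α}

/-- The letter `c` is the only one strictly between the first letters of the two bounds, and each
bound continues beyond the constant string `c`. -/
structure HasCentralLetter (U : Bool → Stream' α) (c : α) : Prop where
  sideLT_head : ∀ e, SideLT e (U e).head c
  eq_of_sideLT_head : ∀ d, (∀ e, SideLT e (U e).head d) → d = c
  sideLE_tail : ∀ e, SideLE e (Stream'.const c) (U e).tail

namespace HasCentralLetter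

lemma exists_head_eq (hc : HasCentralLetter U c) (hx : x ∈ boundedShift U) (hxc : x.head ≠ c) :
    ∃ e, x.head = (U e).head := by
  obtain ⟨e, he⟩ := not_forall.1 fun h => hxc (hc.eq_of_sideLT_head _ h)
  exact ⟨e, SideLE.antisymm (not_sideLT.1 he) (sideLE_of_mem_boundedShift hx e).head⟩

lemma head_ne (hc : HasCentralLetter U c) (e : Bool) : (U e).head ≠ c := fun h =>
  not_sideLT.2 (sideLE_refl e c) (h ▸ hc.sideLT_head e)

lemma sideLE_const_tail (hc : HasCentralLetter U c) (hx : x ∈ boundedShift U)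
    (hcx : SideLE e (Stream'.const c) x) : (if x.head = c then c else (U !e).head) = x.head ∧
      SideLE (if x.head = c then e else !e) (Stream'.const c) x.tail := by
  split_ifs with hxc
  · exact ⟨hxc.symm, hcx.tail hxc.symm⟩
  · obtain ⟨e', he'⟩ := hc.exists_head_eq hx hxc
    obtain rfl | rfl := Bool.eq_or_eq_not e' e
    · exact absurd (hc.sideLT_head e') (not_sideLT.2 (he' ▸ hcx.head))
    · exact ⟨he'.symm,
        (hc.sideLE_tail !e).trans ((sideLE_of_mem_boundedShift hx !e).tail he'.symm)⟩

lemma transitions_ofTransitions (hc : HasCentralLetter U c) (hx : x ∈ boundedShift U)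
    (hcx : SideLE e (Stream'.const c) x) :
    transitions c (fun e => (U e).head) (ofTransitions c e x) = x := by
  refine Stream'.ext fun n => ?_
  induction n generalizing e x with
  | zero =>
    rw [transitions_ofTransitions_eq_cons]
    exact (hc.sideLE_const_tail hx hcx).1
  | succ n ih =>
    rw [transitions_ofTransitions_eq_cons]
    exact ih (drop_mem_boundedShift hx 1) (hc.sideLE_const_tail hx hcx).2

lemma eq_transitionCode (hc : HasCentralLetter U c) (hx : x ∈ boundedShift U)
    (he : x.head = (U e).head) :
    x = transitionCode c (fun e => (U e).head) (ofTransitions c e x.tail) := by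
  have htail : SideLE e (U e).tail x.tail := (sideLE_of_mem_boundedShift hx e).tail he.symm
  rw [transitionCode, hc.transitions_ofTransitions (x := x.tail) (drop_mem_boundedShift hx 1)
    ((hc.sideLE_tail e).trans htail), ofTransitions_eq_cons, Stream'.head_cons, ← he, x.eta]

lemma exists_eq_transitionCode (hc : HasCentralLetter U c)
    (hUV : ∀ e, U e = transitionCode c (fun e => (U e).head) (V e)) (hV : ∀ e, (V e).head = e)
    (hx : x ∈ boundedShift U) (hxc : x.head ≠ c) :
    ∃ y ∈ boundedShift V, transitionCode c (fun e => (U e).head) y = x := by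
  obtain ⟨e, he⟩ := hc.exists_head_eq hx hxc
  have hcode := hc.eq_transitionCode hx he
  exact ⟨_, mem_boundedShift_of_transitionCode_mem hc.sideLT_head hUV hV (hcode ▸ hx),
    hcode.symm⟩

lemma boundedShift_subset (hc : HasCentralLetter U c)
    (hUV : ∀ e, U e = transitionCode c (fun e => (U e).head) (V e)) (hV : ∀ e, (V e).head = e) :
    boundedShift U ⊆ {Stream'.const c} ∪
      splice {Stream'.const c} (transitionCode c (fun e => (U e).head) '' boundedShift V) := by
  intro x hx
  by_cases h : x = Stream'.const c
  · exact .inl h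
  · obtain ⟨m, htake, hne⟩ := exists_take_eq_get_ne h
    obtain ⟨y, hy, hxy⟩ := hc.exists_eq_transitionCode hUV hV (drop_mem_boundedShift hx m)
      (by rwa [Stream'.head_drop])
    exact .inr ⟨m, _, rfl, _, ⟨y, hy, hxy⟩, eq_append_drop_of_take_eq htake⟩

lemma growthLE (hc : HasCentralLetter U c)
    (hUV : ∀ e, U e = transitionCode c (fun e => (U e).head) (V e)) (hV : ∀ e, (V e).head = e)
    {L : ℝ} (hU : GrowthLE (boundedShift U) L) : GrowthLE (boundedShift V) L := by
  have himage (e) : GrowthLE (ofTransitions c e '' boundedShift U) L :=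
    hU.image fun n x x' => ofTransitions_take_eq
  refine ((himage false).union (himage true)).subset fun y hy => ?_
  have hmem : ∃ e, y ∈ ofTransitions c e '' boundedShift U :=
    ⟨y.head, _, drop_mem_boundedShift
      (transitionCode_mem_boundedShift hc.sideLT_head hUV hV hy) 1,
      ofTransitions_transitions hc.head_ne y⟩
  rwa [Bool.exists_bool] at hmem

lemma exists_isPeriodicPair (hc : HasCentralLetter U c) (hU : IsPeriodicPair W U) :
    ∃ W' V, IsPeriodicPair W' V ∧ (∀ e, (W' e).length = (W e).length) ∧
      (∀ e, (V e).head = e) ∧ ∀ e, U e = transitionCode c (fun e => (U e).head) (V e) := by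
  let V (e : Bool) : Stream' Bool := ofTransitions c e (U e).tail
  have hV (e) : (V e).head = e := by
    simp only [V]
    rw [ofTransitions_eq_cons, Stream'.head_cons]
  have hUV (e) : U e = transitionCode c (fun e => (U e).head) (V e) :=
    hc.eq_transitionCode (hU.mem e) rfl
  have hperiod (e) : (V e).drop (W e).length = V e := by
    refine transitionCode_injective hc.sideLT_head ?_
    rw [← drop_transitionCode_of_get_ne, ← hUV, hU.drop_length]
    rw [← hUV, ← Stream'.head_drop, hU.drop_length]
    exact hc.head_ne e
  refine ⟨fun e => (V e).take (W e).length, V, ⟨fun e hnil => ?_, fun e => ?_, fun e => ?_⟩,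
    fun e => Stream'.length_take .., hV, hUV⟩
  · exact hU.ne_nil e (List.length_eq_zero_iff.1 (by simpa using congrArg List.length hnil))
  · conv_rhs => enter [2]; rw [← hperiod e]
    rw [Stream'.append_take_drop]
  · exact mem_boundedShift_of_transitionCode_mem hc.sideLT_head hUV hV (hUV e ▸ hU.mem e)

end HasCentralLetter

lemma IsPeriodicPair.subexponential_or_kraftLE_of_hasCentralLetter (hU : IsPeriodicPair W U)
    (hc : HasCentralLetter U c) :
    Subexponential (boundedShift U) ∨ KraftLE W (boundedShift U) := by
  obtain ⟨W', V, hVper, hlen, hV, hUV⟩ := hc.exists_isPeriodicPair hU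
  obtain hthin | hfree := hVper.subexponential_or_hasFreeWords hV
  · refine .inl (Subexponential.subset ?_ (hc.boundedShift_subset hUV hV))
    exact (subexponential_singleton _).union
      ((subexponential_singleton _).splice (hthin.image fun n y z => transitionCode_take_eq))
  · exact .inr (hfree.kraftLE.of_growthLE hlen fun L _ => hc.growthLE hUV hV)

lemma boundedShift_subset_singleton (h : (U false).head = (U true).head) :
    boundedShift U ⊆ {Stream'.const (U false).head} := fun x hx => Stream'.ext fun n => by
  have hle (e) : SideLE e (U e).head (x.get n) := by
    simpa only [Stream'.head_drop] using (hx e n).head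
  exact le_antisymm (h ▸ hle true) (hle false)

theorem IsPeriodicPair.subexponential_or_kraftLE (hU : IsPeriodicPair W U) :
    Subexponential (boundedShift U) ∨ KraftLE W (boundedShift U) := by
  have hhead : (U false).head ≤ (U true).head := (hU.mem false true 0).head
  obtain heq | hlt := hhead.eq_or_lt
  · exact .inl ((subexponential_singleton _).subset (boundedShift_subset_singleton heq))
  by_cases hno : ∀ c, ¬ ∀ e, SideLT e (U e).head c
  · exact hU.subexponential_or_kraftLE_of_forall_not hlt hno
  push Not at hno
  obtain ⟨c, hc⟩ := hno
  by_cases hd : ∃ d, (∀ e, SideLT e (U e).head d) ∧ c ≠ d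
  · obtain ⟨d, hd, hcd⟩ := hd
    refine .inr ((isFreePair_of_ne_of_sideLT_head hc hd hcd hU.mem).kraftLE fun e => ?_)
    refine le_of_eq_of_le ?_ (List.length_pos_iff.2 (hU.ne_nil e))
    cases e <;> rfl
  by_cases hle : ∃ e, SideLE e (U e).tail (Stream'.const c)
  · obtain ⟨e, hle⟩ := hle
    obtain ⟨w, hw, hlen⟩ := hU.exists_isFreePair_of_sideLE_const hc hle
    exact .inr (hw.kraftLE hlen)
  push Not at hd hle
  exact hU.subexponential_or_kraftLE_of_hasCentralLetter
    ⟨hc, fun d hd' => (hd d hd').symm, fun e => (not_sideLE.1 (hle e)).le⟩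

end CentralLetter

section SigSet

variable {k : ℕ} {u v u' v' : Stream' ℕ} {x : ℕ → ℕ}

/-- The lower bound `u` and the upper bound `v`, indexed by their sides. -/
def bounds (u v : Stream' ℕ) (e : Bool) : Stream' ℕ := cond e v u

lemma iterate_shft (n : ℕ) (x : ℕ → ℕ) : shft^[n] x = Stream'.drop n x := by
  induction n generalizing x with
  | zero => rfl
  | succ n ih => rw [Function.iterate_succ_apply, ih]; rfl

lemma lexLe_iff_le : lexLe u v ↔ u ≤ v := by
  rw [le_iff_eq_or_lt]
  exact Iff.rfl

lemma mem_boundedShift_bounds_iff :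
    x ∈ boundedShift (bounds u v) ↔ ∀ n, lexLe u (shft^[n] x) ∧ lexLe (shft^[n] x) v := by
  have hiff (n) : (lexLe u (shft^[n] x) ∧ lexLe (shft^[n] x) v) ↔
      ∀ e, SideLE e (bounds u v e) (Stream'.drop n x) := by
    rw [Bool.forall_bool, iterate_shft]
    exact and_congr lexLe_iff_le lexLe_iff_le
  simp only [hiff]
  exact forall_comm

lemma SigSet_subset_boundedShift (k : ℕ) (u v : Stream' ℕ) :
    SigSet k u v ⊆ boundedShift (bounds u v) := fun _ hx => mem_boundedShift_bounds_iff.2 hx.2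

lemma SigSet_eq_boundedShift (hv : v 0 < k) : SigSet k u v = boundedShift (bounds u v) := by
  refine (SigSet_subset_boundedShift k u v).antisymm fun (x : Stream' ℕ) hx =>
    ⟨fun i => lt_of_le_of_lt ?_ hv, mem_boundedShift_bounds_iff.1 hx⟩
  have hle := (hx true i).head
  rwa [x.head_drop] at hle

variable {a b : Bool → ℕ} {w : Bool → List ℕ}

lemma IsModification.SigSet_subset (h : IsModification w a b (bounds u v) (bounds u' v')) :
    SigSet k u v ⊆ SigSet k u' v' := fun _ hx =>
  ⟨hx.1, mem_boundedShift_bounds_iff.1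
    (h.boundedShift_subset (SigSet_subset_boundedShift k u v hx))⟩

theorem IsModification.entS_eq (h : IsModification w a b (bounds u v) (bounds u' v'))
    (hU : ∀ e, bounds u v e ∈ boundedShift (bounds u v)) (hv : v 0 < k) (hpos : 0 < entS k u v) :
    entS k u v = entS k u' v' := by
  have hlog (s : ℝ) : Real.logb 2 (2 ^ s) = s := Real.logb_rpow two_pos one_lt_two.ne'
  have hkraft : KraftLE (fun e => w e ++ [a e]) (boundedShift (bounds u v)) := by
    refine (h.isPeriodicPair hU).subexponential_or_kraftLE.resolve_left fun hthin => ?_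
    have hle : entS k u v ≤ Real.logb 2 (2 ^ (entS k u v / 2)) := by
      refine entS_le_logb (Real.one_le_rpow one_le_two (by positivity)) ?_
      rw [SigSet_eq_boundedShift hv]
      exact hthin _ (Real.one_lt_rpow one_lt_two (by positivity))
    rw [hlog] at hle
    linarith
  have hgrowth {s : ℝ} (hs : entS k u v < s) : GrowthLE (boundedShift (bounds u v)) (2 ^ s) := by
    rw [← SigSet_eq_boundedShift hv]
    exact growthLE_of_entS_lt (by positivity) (by rwa [hlog])
  have hone {s : ℝ} (hs : 0 ≤ s) : (1 : ℝ) ≤ 2 ^ s := Real.one_le_rpow one_le_two hs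
  apply le_antisymm
  · refine le_of_forall_gt_imp_ge_of_dense fun s hs => ?_
    rw [← hlog s]
    refine entS_le_logb (hone ((entS_nonneg k u' v').trans hs.le)) ?_
    exact (growthLE_of_entS_lt (by positivity) (by rwa [hlog])).subset h.SigSet_subset
  · refine le_of_forall_gt_imp_ge_of_dense fun s hs => ?_
    obtain ⟨r, hr, hrs⟩ := exists_between hs
    rw [← hlog s]
    refine entS_le_logb (hone (hpos.trans hs).le) ?_
    refine GrowthLE.subset ?_ (SigSet_subset_boundedShift k u' v')
    refine h.growthLE hU (hone (hpos.trans hr).le) ?_ (hgrowth hr) ?_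
    · exact Real.rpow_lt_rpow_of_exponent_lt one_lt_two hrs
    · simpa using hkraft _ (hone (hpos.trans hr).le) (hgrowth hr)

lemma wcat_eq_append (p : ℕ) (w y : Stream' ℕ) : wcat p w y = w.take p ++ₛ y := by
  induction p generalizing w with
  | zero => rfl
  | succ p ih =>
    rw [Stream'.take_succ, Stream'.cons_append_stream, ← ih]
    funext n
    cases n with
    | zero => rfl
    | succ n => simp only [wcat, Nat.add_lt_add_iff_right, Nat.add_sub_add_right]; rfl

lemma wcat_ite_eq_append {p : ℕ} (hp : 0 < p) (w y : Stream' ℕ) (c : ℕ) :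
    wcat p (fun i => if i = p - 1 then c else w i) y = w.take (p - 1) ++ₛ c :: y := by
  obtain ⟨m, rfl⟩ := Nat.exists_eq_add_one.2 hp
  let w' : Stream' ℕ := fun i => if i = m then c else w i
  have hlast : w'.get m = c := if_pos rfl
  have htake : w'.take m = w.take m := List.ext_getElem (by simp) fun i hi _ => by
    rw [Stream'.length_take] at hi
    rw [Stream'.take_get, Stream'.take_get]
    exact if_neg hi.ne
  refine (wcat_eq_append (m + 1) w' y).trans ?_
  rw [Stream'.take_succ', Stream'.append_append_stream, htake, hlast]
  rfl

lemma mod_eq_append {p : ℕ} (hp : 0 < p) (w : Stream' ℕ) :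
    (fun n => w (n % p)) = w.take (p - 1) ++ₛ w (p - 1) :: fun n => w (n % p) := by
  refine Eq.trans (funext fun n => ?_) (wcat_ite_eq_append hp w _ _)
  obtain hn | hn := lt_or_ge n p
  · simp +contextual [wcat, hn, Nat.mod_eq_of_lt]
  · rw [wcat, if_neg hn.not_gt, Nat.mod_eq_sub_mod hn]

end SigSet

end LexShift

theorem entropy_periodic_modifications_general {k p q : ℕ} (hp : 0 < p) (hq : 0 < q)
    {a b u v ustar vstar : ℕ → ℕ} (hbk : b 0 < k)
    (hua : u = fun n => a (n % p)) (hvb : v = fun n => b (n % q))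
    (hcond : ∀ n, lexLe u (shft^[n] u) ∧ lexLe (shft^[n] u) v ∧
                  lexLe u (shft^[n] v) ∧ lexLe (shft^[n] v) v)
    (hap : 1 ≤ a (p - 1))
    (hustar : ustar = wcat p (fun i => if i = p - 1 then a (p - 1) - 1 else a i) v)
    (hvstar : vstar = wcat q (fun i => if i = q - 1 then b (q - 1) + 1 else b i) u)
    (hpos : 0 < entS k u v) : entS k u v = entS k ustar vstar := by
  have hmod : LexShift.IsModification
      (fun e => cond e (Stream'.take (q - 1) b) (Stream'.take (p - 1) a))
      (fun e => cond e (b (q - 1)) (a (p - 1)))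
      (fun e => cond e (b (q - 1) + 1) (a (p - 1) - 1))
      (LexShift.bounds u v) (LexShift.bounds ustar vstar) := by
    refine ⟨Bool.forall_bool.2 ⟨?_, ?_⟩, Bool.forall_bool.2 ⟨?_, ?_⟩,
      Bool.forall_bool.2 ⟨?_, ?_⟩, Bool.forall_bool.2 ⟨?_, ?_⟩⟩
    · exact hua ▸ LexShift.mod_eq_append hp a
    · exact hvb ▸ LexShift.mod_eq_append hq b
    · exact hustar.trans (LexShift.wcat_ite_eq_append hp a v _)
    · exact hvstar.trans (LexShift.wcat_ite_eq_append hq b u _)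
    · exact Nat.sub_one_lt_of_lt hap
    · exact Nat.lt_succ_self _
    · exact fun t h h' => h'.not_ge (Nat.le_of_pred_lt h)
    · exact fun t h h' => h'.not_ge (Nat.le_of_lt_succ h)
  refine hmod.entS_eq (Bool.forall_bool.2 ⟨?_, ?_⟩) ?_ hpos
  · exact LexShift.mem_boundedShift_bounds_iff.2 fun n => ⟨(hcond n).1, (hcond n).2.1⟩
  · exact LexShift.mem_boundedShift_bounds_iff.2 fun n => (hcond n).2.2
  · simpa [hvb] using hbk

/-- **Entropy equality for the two periodic modifications.** Let `k ≥ 2`, `p, q ≥ 2`,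
let `a` be a word of length `p` with `a₀ = 0` and `b` a word of length `q` with
`b₀ = k−1`; let `u = a^∞`, `v = b^∞`, with `p`, `q` the minimal periods of `u`, `v`;
assume `u ≼ σⁿu ≼ v` and `u ≼ σⁿv ≼ v` for all `n ≥ 0`, `a_{p−1} ≥ 1` and
`b_{q−1} ≤ k−2`. Set `a′ = a₀⋯a_{p−2}(a_{p−1}−1)`, `b′ = b₀⋯b_{q−2}(b_{q−1}+1)`,
`u* = a′ ⌢ b^∞`, `v* = b′ ⌢ a^∞`. If `h(Σ(u,v)) > 0`, then
`h(Σ(u,v)) = h(Σ(u*,v*))`. -/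
theorem entropy_periodic_modifications (k p q : ℕ) (hk : 2 ≤ k) (hp : 2 ≤ p) (hq : 2 ≤ q)
    (a b : ℕ → ℕ) (ha : ∀ i, i < p → a i < k) (hb : ∀ i, i < q → b i < k)
    (ha0 : a 0 = 0) (hb0 : b 0 = k - 1)
    (u v ustar vstar : ℕ → ℕ)
    (hua : u = fun n => a (n % p)) (hvb : v = fun n => b (n % q))
    (hpmin : ∀ m, 1 ≤ m → m < p → shft^[m] u ≠ u)
    (hqmin : ∀ m, 1 ≤ m → m < q → shft^[m] v ≠ v)
    (hcond : ∀ n, lexLe u (shft^[n] u) ∧ lexLe (shft^[n] u) v ∧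
                  lexLe u (shft^[n] v) ∧ lexLe (shft^[n] v) v)
    (hap : 1 ≤ a (p - 1)) (hbq : b (q - 1) ≤ k - 2)
    (hustar : ustar = wcat p (fun i => if i = p - 1 then a (p - 1) - 1 else a i) v)
    (hvstar : vstar = wcat q (fun i => if i = q - 1 then b (q - 1) + 1 else b i) u) :
    0 < entS k u v → entS k u v = entS k ustar vstar := by
  exact entropy_periodic_modifications_general (by lia) (by lia) (hb 0 (by lia)) hua hvb hcond hap
    hustar hvstar
end
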